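/- arXiv:math/0401309 — 2 statements merged into one kernel-verified Lean document; each statement's English description precedes it below -/
import Mathlib

section
/- Let n ≥ 2, α ∈ (0,2), and let σ be the surface measure on the unit sphere S ⊆ ℝⁿ. Let v be α-harmonic in the open unit ball B and positive on B, and suppose there exists c > 0 such that v(x) ≥ c (1−|x|)^{α/2−1} for all x ∈ B. Then for every function u that is α-harmonic in B and positive on B, for σ-almost every z ∈ S and every β > 1, the limit of u(x)/v(x) as x → z with x ∈ A^β_z exists. -/
open Metric Set MeasureTheory Filter

/-- The α-stable Poisson kernel of the ball `B(x₀, r)`. -/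
noncomputable def stablePoissonKernel (n : ℕ) (α : ℝ) (x₀ : EuclideanSpace ℝ (Fin n))
    (r : ℝ) (x v : EuclideanSpace ℝ (Fin n)) : ℝ :=
  (Real.Gamma (n / 2) * Real.pi ^ (-(n : ℝ) / 2 - 1) * Real.sin (Real.pi * α / 2)) *
    ((r ^ 2 - dist x x₀ ^ 2) / (dist v x₀ ^ 2 - r ^ 2)) ^ (α / 2) *
    dist x v ^ (-(n : ℝ))

/-- `u : ℝⁿ → [0,∞)` Borel with `∫ u(x)(1+|x|)^{−n−α} dx < ∞` is α-harmonic in the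
open set `D` if, for every ball whose closure lies in `D` and every point `x` of the
ball, `∫_{|v−x₀|>r} P_{x₀,r}(x,v) u(v) dv` is finite and equals `u(x)`. -/
def IsAlphaHarmonic (n : ℕ) (α : ℝ) (D : Set (EuclideanSpace ℝ (Fin n)))
    (u : EuclideanSpace ℝ (Fin n) → ℝ) : Prop :=
  Measurable u ∧ (∀ x, 0 ≤ u x) ∧
    Integrable (fun x => u x * (1 + ‖x‖) ^ (-(n : ℝ) - α)) ∧
    ∀ (x₀ : EuclideanSpace ℝ (Fin n)) (r : ℝ), 0 < r → closedBall x₀ r ⊆ D →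
      ∀ x ∈ ball x₀ r,
        IntegrableOn (fun v => stablePoissonKernel n α x₀ r x v * u v)
          {v | r < dist v x₀} ∧
        ∫ v in {v | r < dist v x₀}, stablePoissonKernel n α x₀ r x v * u v = u x

/-- Martin kernel of the unit ball for the symmetric α-stable process, normalized at
the origin: `M(x,w) = (1−|x|²)^{α/2} |x−w|^{−n}`. -/
noncomputable def martinKernel (n : ℕ) (α : ℝ) (x w : EuclideanSpace ℝ (Fin n)) : ℝ :=
  (1 - ‖x‖ ^ 2) ^ (α / 2) * dist x w ^ (-(n : ℝ))

/-- Stolz open set of the unit ball at a boundary point `z`, with angle `β > 1`: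
`A^β_z = { y ∈ B : 1−|y| < 1/3 ∧ |y−z| < β(1−|y|) }`. -/
def stolzSet (n : ℕ) (β : ℝ) (z : EuclideanSpace ℝ (Fin n)) :
    Set (EuclideanSpace ℝ (Fin n)) :=
  {y | y ∈ ball (0 : EuclideanSpace ℝ (Fin n)) 1 ∧ 1 - ‖y‖ < 1 / 3 ∧
    dist y z < β * (1 - ‖y‖)}

/-!
Applying the Poisson formula in the balls `B(0, R)` and letting `R ↑ 1`, a weak limit of the
exterior measures shows that `u(x) / (1 - |x|²)^{α/2}` is, up to a bounded error, the potential of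
a finite measure `m` for the kernel `max(|x - w|, (1 - |x|)/2)⁻ⁿ`. This kernel is a Poisson kernel
divided by the distance to the boundary, so differentiating `m` with respect to the surface measure
`σ` by Besicovitch's theorem gives a relative Fatou theorem: `σ`-almost everywhere the potential of
`m` divided by that of `σ` tends to `dm/dσ` in every Stolz set. The potential of `σ` is of order
`1 / (1 - |x|)`, so the bounded error does not matter, and the lower bound on `v` says precisely
that the limit belonging to `v` is not zero. The ratio `u / v` therefore converges.
-/

open scoped Topology

section CutoffKernel

variable {X : Type*} [PseudoMetricSpace X] {n k : ℕ} {d β : ℝ} {x z w : X}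

/-- The kernel `|x - w|⁻ⁿ`, made bounded by not letting the distance drop below `d`. For
`n = k + 1` it is, up to the factor `d`, comparable to the Poisson kernel at height `d` above a
`k`-dimensional boundary. -/
noncomputable def cutoffKernel (n : ℕ) (d : ℝ) (x w : X) : ℝ :=
  (max (dist x w) d ^ n)⁻¹

lemma cutoffKernel_nonneg : 0 ≤ cutoffKernel n d x w :=
  inv_nonneg.2 (pow_nonneg (le_max_of_le_left dist_nonneg) n)

lemma cutoffKernel_le_of_le_max {t : ℝ} (ht : 0 < t) (h : t ≤ max (dist x w) d) :
    cutoffKernel n d x w ≤ (t ^ n)⁻¹ := by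
  unfold cutoffKernel
  gcongr

lemma norm_cutoffKernel_le (hd : 0 < d) : ‖cutoffKernel n d x w‖ ≤ (d ^ n)⁻¹ := by
  rw [Real.norm_of_nonneg cutoffKernel_nonneg]
  exact cutoffKernel_le_of_le_max hd (le_max_right _ _)

lemma cutoffKernel_of_le_dist (h : d ≤ dist x w) : cutoffKernel n d x w = (dist x w ^ n)⁻¹ := by
  rw [cutoffKernel, max_eq_left h]

lemma cutoffKernel_of_dist_le (h : dist x w ≤ d) : cutoffKernel n d x w = (d ^ n)⁻¹ := by
  rw [cutoffKernel, max_eq_right h]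

lemma continuous_cutoffKernel (hd : 0 < d) : Continuous (cutoffKernel n d x) :=
  Continuous.inv₀ (by fun_prop) fun _ => (pow_pos (lt_max_of_lt_right hd) n).ne'

lemma cutoffKernel_le_mul_of_dist_le (hd : 0 < d) (hxz : dist x z ≤ β * d) :
    cutoffKernel n d x w ≤ (1 + β) ^ n * cutoffKernel n d z w := by
  have hβ : 0 ≤ β := nonneg_of_mul_nonneg_left (dist_nonneg.trans hxz) hd
  have hx : 0 < max (dist x w) d := lt_max_of_lt_right hd
  have hz : 0 < max (dist z w) d := lt_max_of_lt_right hd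
  have hmax : max (dist z w) d ≤ (1 + β) * max (dist x w) d := by
    have hdx : d ≤ max (dist x w) d := le_max_right _ _
    have hβd : β * d ≤ β * max (dist x w) d := by gcongr
    refine max_le ?_ (by nlinarith)
    linarith [dist_triangle_left z w x, le_max_left (dist x w) d]
  unfold cutoffKernel
  rw [← div_eq_mul_inv, ← div_pow, ← inv_pow]
  gcongr
  rw [le_div_iff₀ hz, inv_mul_le_iff₀ hx]
  exact hmax.trans_eq (mul_comm _ _)

-- For `dist z w` in `(2ʲ⁻¹ d, 2ʲ d]` (or `[0, d]` if `j = 0`) the `j`-th term alone suffices.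
lemma ofReal_cutoffKernel_le_tsum_indicator (hd : 0 < d) :
    ENNReal.ofReal (cutoffKernel n d z w) ≤ ∑' j : ℕ, (closedBall z (2 ^ j * d)).indicator
      (fun _ => ENNReal.ofReal (2 ^ n * ((2 ^ j * d) ^ n)⁻¹)) w := by
  classical
  have hex : ∃ j : ℕ, dist z w ≤ 2 ^ j * d := by
    obtain ⟨j, hj⟩ := pow_unbounded_of_one_lt (dist z w / d) one_lt_two
    exact ⟨j, ((div_lt_iff₀ hd).1 hj).le⟩
  set j := Nat.find hex
  have hhalf : 2 ^ j * d / 2 ≤ max (dist z w) d := by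
    cases hj : j with
    | zero => exact le_max_of_le_right (by linarith)
    | succ i =>
      have hi : 2 ^ i * d < dist z w := not_le.1 (Nat.find_min hex (by omega))
      exact le_max_of_le_left (by rw [pow_succ]; linarith)
  refine le_trans ?_ (ENNReal.le_tsum j)
  rw [indicator_of_mem (mem_closedBall'.2 (Nat.find_spec hex))]
  refine ENNReal.ofReal_le_ofReal
    ((cutoffKernel_le_of_le_max (by positivity) hhalf).trans_eq ?_)
  rw [div_pow, inv_div, div_eq_mul_inv]

variable [MeasurableSpace X] {μ : Measure X}

/-- The potential of `μ` for the kernel `cutoffKernel n d`, as a function of the point `x` and the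
height `d`. -/
noncomputable def cutoffPotential (n : ℕ) (μ : Measure X) (x : X) (d : ℝ) : ℝ :=
  ∫ w, cutoffKernel n d x w ∂μ

lemma cutoffPotential_nonneg : 0 ≤ cutoffPotential n μ x d :=
  integral_nonneg fun _ => cutoffKernel_nonneg

variable [OpensMeasurableSpace X]

lemma integrable_cutoffKernel [IsFiniteMeasure μ] (hd : 0 < d) :
    Integrable (cutoffKernel n d x) μ :=
  .of_bound (continuous_cutoffKernel hd).aestronglyMeasurable _
    (.of_forall fun _ => norm_cutoffKernel_le hd)

lemma cutoffPotential_le_mul_of_dist_le [IsFiniteMeasure μ] (hd : 0 < d)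
    (hxz : dist x z ≤ β * d) :
    cutoffPotential n μ x d ≤ (1 + β) ^ n * cutoffPotential n μ z d := by
  simp only [cutoffPotential, ← integral_const_mul]
  exact integral_mono (integrable_cutoffKernel hd) ((integrable_cutoffKernel hd).const_mul _)
    fun _ => cutoffKernel_le_mul_of_dist_le hd hxz

lemma measureReal_closedBall_div_pow_le [IsFiniteMeasure μ] (hd : 0 < d) :
    μ.real (closedBall z d) / d ^ k ≤ d * cutoffPotential (k + 1) μ z d := by
  have hball : μ.real (closedBall z d) * (d ^ (k + 1))⁻¹ ≤ cutoffPotential (k + 1) μ z d :=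
    calc μ.real (closedBall z d) * (d ^ (k + 1))⁻¹
        = ∫ w in closedBall z d, cutoffKernel (k + 1) d z w ∂μ := by
          rw [setIntegral_congr_fun isClosed_closedBall.measurableSet fun w hw =>
            cutoffKernel_of_dist_le (mem_closedBall'.1 hw), setIntegral_const, smul_eq_mul]
      _ ≤ cutoffPotential (k + 1) μ z d :=
          setIntegral_le_integral (integrable_cutoffKernel hd)
            (.of_forall fun _ => cutoffKernel_nonneg)
  calc μ.real (closedBall z d) / d ^ k = d * (μ.real (closedBall z d) * (d ^ (k + 1))⁻¹) := by
        rw [pow_succ]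
        field_simp
    _ ≤ d * cutoffPotential (k + 1) μ z d := by gcongr

lemma lintegral_cutoffKernel_le {b : ℝ} (hd : 0 < d) (hb : 0 ≤ b)
    (hμ : ∀ r > 0, μ (closedBall z r) ≤ ENNReal.ofReal (b * r ^ k)) :
    ∫⁻ w, ENNReal.ofReal (cutoffKernel (k + 1) d z w) ∂μ ≤
      ENNReal.ofReal (2 ^ (k + 2) * b / d) := by
  have hterm (j : ℕ) : ENNReal.ofReal (2 ^ (k + 1) * ((2 ^ j * d) ^ (k + 1))⁻¹) *
      μ (closedBall z (2 ^ j * d)) ≤ ENNReal.ofReal (2 ^ (k + 1) * b / d * (1 / 2) ^ j) :=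
    calc _ ≤ ENNReal.ofReal (2 ^ (k + 1) * ((2 ^ j * d) ^ (k + 1))⁻¹) *
          ENNReal.ofReal (b * (2 ^ j * d) ^ k) := by gcongr; exact hμ _ (by positivity)
      _ = ENNReal.ofReal (2 ^ (k + 1) * b / d * (1 / 2) ^ j) := by
        rw [← ENNReal.ofReal_mul (by positivity), one_div, inv_pow, pow_succ (2 ^ j * d)]
        field_simp
  calc ∫⁻ w, ENNReal.ofReal (cutoffKernel (k + 1) d z w) ∂μ
      ≤ ∫⁻ w, ∑' j : ℕ, (closedBall z (2 ^ j * d)).indicator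
        (fun _ => ENNReal.ofReal (2 ^ (k + 1) * ((2 ^ j * d) ^ (k + 1))⁻¹)) w ∂μ :=
        lintegral_mono fun _ => ofReal_cutoffKernel_le_tsum_indicator hd
    _ = ∑' j : ℕ, ENNReal.ofReal (2 ^ (k + 1) * ((2 ^ j * d) ^ (k + 1))⁻¹) *
        μ (closedBall z (2 ^ j * d)) := by
        rw [lintegral_tsum fun j =>
          (measurable_const.indicator isClosed_closedBall.measurableSet).aemeasurable]
        simp only [lintegral_indicator_const isClosed_closedBall.measurableSet]
    _ ≤ ∑' j : ℕ, ENNReal.ofReal (2 ^ (k + 1) * b / d * (1 / 2) ^ j) :=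
        ENNReal.tsum_le_tsum hterm
    _ = ENNReal.ofReal (2 ^ (k + 2) * b / d) := by
        rw [← ENNReal.ofReal_tsum_of_nonneg (fun j => by positivity)
          (summable_geometric_two.mul_left _), tsum_mul_left, tsum_geometric_two]
        congr 1
        ring

lemma cutoffPotential_le_of_measureReal_closedBall_le [IsFiniteMeasure μ] {b : ℝ} (hd : 0 < d)
    (hμ : ∀ r > 0, μ.real (closedBall z r) ≤ b * r ^ k) :
    d * cutoffPotential (k + 1) μ z d ≤ 2 ^ (k + 2) * b := by
  have hb : 0 ≤ b := by simpa using measureReal_nonneg.trans (hμ 1 one_pos)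
  have hlint := lintegral_cutoffKernel_le hd hb fun r hr =>
    (ENNReal.le_ofReal_iff_toReal_le (measure_ne_top μ _) (by positivity)).2 (hμ r hr)
  rw [← ofReal_integral_eq_lintegral_ofReal (integrable_cutoffKernel hd)
    (.of_forall fun _ => cutoffKernel_nonneg),
    ENNReal.ofReal_le_ofReal_iff (by positivity), le_div_iff₀' hd] at hlint
  exact hlint

lemma cutoffPotential_le_of_measureReal_closedBall_le_of_le [IsFiniteMeasure μ] {b ρ : ℝ}
    (hd : 0 < d) (hρ : 0 < ρ) (hμ : ∀ r > 0, r ≤ ρ → μ.real (closedBall z r) ≤ b * r ^ k) :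
    d * cutoffPotential (k + 1) μ z d ≤
      2 ^ (k + 2) * b + d * ((ρ ^ (k + 1))⁻¹ * μ.real univ) := by
  have hB : MeasurableSet (closedBall z ρ) := isClosed_closedBall.measurableSet
  have hb : 0 ≤ b := nonneg_of_mul_nonneg_left (measureReal_nonneg.trans (hμ ρ hρ le_rfl))
    (pow_pos hρ k)
  have hnear : d * cutoffPotential (k + 1) (μ.restrict (closedBall z ρ)) z d ≤
      2 ^ (k + 2) * b := by
    refine cutoffPotential_le_of_measureReal_closedBall_le hd fun r hr => ?_
    rw [measureReal_restrict_apply isClosed_closedBall.measurableSet]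
    rcases le_total r ρ with hrρ | hρr
    · exact (measureReal_mono inter_subset_left).trans (hμ r hr hrρ)
    · calc μ.real (closedBall z r ∩ closedBall z ρ) ≤ b * ρ ^ k :=
            (measureReal_mono inter_subset_right).trans (hμ ρ hρ le_rfl)
        _ ≤ b * r ^ k := by gcongr
  have hfar : ∫ w in (closedBall z ρ)ᶜ, cutoffKernel (k + 1) d z w ∂μ ≤
      (ρ ^ (k + 1))⁻¹ * μ.real univ :=
    calc _ ≤ ∫ _ in (closedBall z ρ)ᶜ, (ρ ^ (k + 1))⁻¹ ∂μ := by
          refine setIntegral_mono_on (integrable_cutoffKernel hd) (integrable_const _) hB.compl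
            fun w hw => cutoffKernel_le_of_le_max hρ (le_max_of_le_left ?_)
          exact (not_le.1 fun h => hw (mem_closedBall'.2 h)).le
      _ ≤ (ρ ^ (k + 1))⁻¹ * μ.real univ := by
          rw [setIntegral_const, smul_eq_mul, mul_comm]
          gcongr
          exacts [measure_ne_top μ _, subset_univ _]
  rw [cutoffPotential, ← integral_add_compl hB (integrable_cutoffKernel hd), mul_add]
  exact add_le_add hnear (by gcongr)

end CutoffKernel

section AhlforsRegular

variable {X : Type*} [PseudoMetricSpace X] [MeasurableSpace X] {k : ℕ} {μ σ : Measure X} {z : X}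

/-- `σ` is `k`-dimensional at `z` in the sense of Ahlfors and David: the ball of radius `r` about
`z` has `σ`-measure comparable to `r ^ k` for all small `r`. The lower bound forces these balls to
have finite measure, so that `Measure.real` is meaningful here. -/
def IsAhlforsRegularAt (σ : Measure X) (k : ℕ) (z : X) : Prop :=
  ∃ c > 0, ∃ C : ℝ, ∀ᶠ r in 𝓝[>] (0 : ℝ),
    c * r ^ k ≤ σ.real (closedBall z r) ∧ σ.real (closedBall z r) ≤ C * r ^ k

lemma IsAhlforsRegularAt.tendsto_measureReal_div_pow (hσ : IsAhlforsRegularAt σ k z)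
    (hμ : Tendsto (fun r => μ.real (closedBall z r) / σ.real (closedBall z r)) (𝓝[>] 0) (𝓝 0)) :
    Tendsto (fun r => μ.real (closedBall z r) / r ^ k) (𝓝[>] 0) (𝓝 0) := by
  obtain ⟨c, hc, C, hσ⟩ := hσ
  refine squeeze_zero' (eventually_mem_nhdsWithin.mono fun r (hr : 0 < r) => by positivity) ?_
    (by simpa using hμ.const_mul C)
  filter_upwards [hσ, self_mem_nhdsWithin] with r ⟨hlower, hupper⟩ (hr : 0 < r)
  have hpos : 0 < σ.real (closedBall z r) := lt_of_lt_of_le (by positivity) hlower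
  rw [mul_div_assoc', div_le_div_iff₀ (by positivity) hpos]
  nlinarith [measureReal_nonneg (μ := μ) (s := closedBall z r)]

variable [OpensMeasurableSpace X] [IsFiniteMeasure μ] [IsFiniteMeasure σ]
  {ι : Type*} {l : Filter ι} {x : ι → X} {d : ι → ℝ} {β : ℝ}

lemma tendsto_mul_cutoffPotential_center
    (hμ : Tendsto (fun r => μ.real (closedBall z r) / r ^ k) (𝓝[>] 0) (𝓝 0)) :
    Tendsto (fun d => d * cutoffPotential (k + 1) μ z d) (𝓝[>] 0) (𝓝 0) := by
  refine tendsto_order.2 ⟨fun a ha => ?_, fun ε hε => ?_⟩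
  · filter_upwards [self_mem_nhdsWithin] with d (hd : 0 < d)
    exact ha.trans_le (mul_nonneg hd.le cutoffPotential_nonneg)
  · obtain ⟨ρ, hρ : 0 < ρ, hsmall⟩ := mem_nhdsGT_iff_exists_Ioc_subset.1
      (hμ.eventually_le_const (u := ε / 2 ^ (k + 3)) (by positivity))
    have hball : ∀ r > 0, r ≤ ρ → μ.real (closedBall z r) ≤ ε / 2 ^ (k + 3) * r ^ k :=
      fun r hr hrρ => (div_le_iff₀ (by positivity)).1 (hsmall ⟨hr, hrρ⟩)
    have htail : Tendsto (fun d => ε / 2 + d * ((ρ ^ (k + 1))⁻¹ * μ.real univ)) (𝓝[>] 0)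
        (𝓝 (ε / 2)) := by
      refine tendsto_nhdsWithin_of_tendsto_nhds (Continuous.tendsto' ?_ _ _ ?_)
      · fun_prop
      · simp
    filter_upwards [self_mem_nhdsWithin, htail.eventually_lt_const (half_lt_self hε)]
      with d (hd : 0 < d) hlt
    refine (cutoffPotential_le_of_measureReal_closedBall_le_of_le hd hρ hball).trans_lt ?_
    convert hlt using 2
    rw [pow_succ _ (k + 2)]
    field_simp

lemma tendsto_mul_cutoffPotential
    (hμ : Tendsto (fun r => μ.real (closedBall z r) / r ^ k) (𝓝[>] 0) (𝓝 0))
    (hd : Tendsto d l (𝓝[>] 0)) (hx : ∀ᶠ i in l, dist (x i) z ≤ β * d i) :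
    Tendsto (fun i => d i * cutoffPotential (k + 1) μ (x i) (d i)) l (𝓝 0) := by
  have hcenter := ((tendsto_mul_cutoffPotential_center hμ).comp hd).const_mul ((1 + β) ^ (k + 1))
  rw [mul_zero] at hcenter
  have hpos : ∀ᶠ i in l, 0 < d i := hd.eventually self_mem_nhdsWithin
  refine squeeze_zero' (hpos.mono fun i hi => mul_nonneg hi.le cutoffPotential_nonneg) ?_ hcenter
  filter_upwards [hpos, hx] with i hi hxi
  rw [Function.comp_apply, mul_left_comm]
  gcongr
  exact cutoffPotential_le_mul_of_dist_le hi hxi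

lemma IsAhlforsRegularAt.exists_eventually_le_mul_cutoffPotential
    (hσ : IsAhlforsRegularAt σ k z) (hβ : 0 ≤ β)
    (hd : Tendsto d l (𝓝[>] 0)) (hx : ∀ᶠ i in l, dist (x i) z ≤ β * d i) :
    ∃ a > 0, ∀ᶠ i in l, a ≤ d i * cutoffPotential (k + 1) σ (x i) (d i) := by
  obtain ⟨c, hc, C, hσ⟩ := hσ
  refine ⟨c / (1 + β) ^ (k + 1), by positivity, ?_⟩
  filter_upwards [hd.eventually hσ, hd.eventually self_mem_nhdsWithin, hx]
    with i ⟨hlower, _⟩ (hi : 0 < d i) hxi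
  rw [div_le_iff₀' (by positivity)]
  calc c ≤ σ.real (closedBall z (d i)) / d i ^ k := (le_div_iff₀ (by positivity)).2 hlower
    _ ≤ d i * cutoffPotential (k + 1) σ z (d i) := measureReal_closedBall_div_pow_le hi
    _ ≤ d i * ((1 + β) ^ (k + 1) * cutoffPotential (k + 1) σ (x i) (d i)) := by
        gcongr
        exact cutoffPotential_le_mul_of_dist_le hi (by rwa [dist_comm])
    _ = (1 + β) ^ (k + 1) * (d i * cutoffPotential (k + 1) σ (x i) (d i)) := mul_left_comm _ _ _

lemma IsAhlforsRegularAt.exists_eventually_mul_cutoffPotential_le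
    (hσ : IsAhlforsRegularAt σ k z)
    (hd : Tendsto d l (𝓝[>] 0)) (hx : ∀ᶠ i in l, dist (x i) z ≤ β * d i) :
    ∃ A, ∀ᶠ i in l, d i * cutoffPotential (k + 1) σ (x i) (d i) ≤ A := by
  obtain ⟨_, _, C, hσ⟩ := hσ
  obtain ⟨ρ, hρ : 0 < ρ, hball⟩ := mem_nhdsGT_iff_exists_Ioc_subset.1 hσ
  refine ⟨(1 + β) ^ (k + 1) *
    (2 ^ (k + 2) * C + 1 * ((ρ ^ (k + 1))⁻¹ * σ.real univ)), ?_⟩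
  filter_upwards [hd.eventually (Ioo_mem_nhdsGT one_pos), hx] with i ⟨hi, hi1⟩ hxi
  have hβ : 0 ≤ β := nonneg_of_mul_nonneg_left (dist_nonneg.trans hxi) hi
  calc d i * cutoffPotential (k + 1) σ (x i) (d i)
      ≤ d i * ((1 + β) ^ (k + 1) * cutoffPotential (k + 1) σ z (d i)) := by
        gcongr
        exact cutoffPotential_le_mul_of_dist_le hi hxi
    _ = (1 + β) ^ (k + 1) * (d i * cutoffPotential (k + 1) σ z (d i)) := mul_left_comm _ _ _
    _ ≤ (1 + β) ^ (k + 1) *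
        (2 ^ (k + 2) * C + d i * ((ρ ^ (k + 1))⁻¹ * σ.real univ)) := by
        gcongr
        exact cutoffPotential_le_of_measureReal_closedBall_le_of_le hi hρ fun r hr hrρ =>
          (hball ⟨hr, hrρ⟩).2
    _ ≤ _ := by gcongr

lemma IsAhlforsRegularAt.tendsto_cutoffPotential_atTop
    (hσ : IsAhlforsRegularAt σ k z) (hβ : 0 ≤ β)
    (hd : Tendsto d l (𝓝[>] 0)) (hx : ∀ᶠ i in l, dist (x i) z ≤ β * d i) :
    Tendsto (fun i => cutoffPotential (k + 1) σ (x i) (d i)) l atTop := by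
  obtain ⟨a, ha, hlower⟩ := hσ.exists_eventually_le_mul_cutoffPotential hβ hd hx
  refine tendsto_atTop_mono' l ?_ ((tendsto_inv_nhdsGT_zero.comp hd).const_mul_atTop ha)
  filter_upwards [hlower, hd.eventually self_mem_nhdsWithin] with i hai (hi : 0 < d i)
  rwa [Function.comp_apply, ← div_eq_mul_inv, div_le_iff₀' hi]

lemma IsAhlforsRegularAt.pos_of_tendsto_div_cutoffPotential [l.NeBot] {f : ι → ℝ} {b L : ℝ}
    (hσ : IsAhlforsRegularAt σ k z) (hβ : 0 ≤ β)
    (hd : Tendsto d l (𝓝[>] 0)) (hx : ∀ᶠ i in l, dist (x i) z ≤ β * d i)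
    (hb : 0 < b) (hf : ∀ᶠ i in l, b ≤ d i * f i)
    (hL : Tendsto (fun i => f i / cutoffPotential (k + 1) σ (x i) (d i)) l (𝓝 L)) : 0 < L := by
  obtain ⟨a, ha, hlower⟩ := hσ.exists_eventually_le_mul_cutoffPotential hβ hd hx
  obtain ⟨A, hupper⟩ := hσ.exists_eventually_mul_cutoffPotential_le hd hx
  have hA : 0 < A := by
    obtain ⟨i, hai, hiA⟩ := (hlower.and hupper).exists
    exact ha.trans_le (hai.trans hiA)
  refine (div_pos hb hA).trans_le (ge_of_tendsto hL ?_)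
  filter_upwards [hlower, hupper, hf, hd.eventually self_mem_nhdsWithin]
    with i hai hiA hbi (hi : 0 < d i)
  rw [← mul_div_mul_left (f i) _ hi.ne']
  exact div_le_div₀ (hb.le.trans hbi) hbi (ha.trans_le hai) hiA

end AhlforsRegular

section RelativeFatou

variable {X : Type*} [MeasurableSpace X]

/-- The total variation of the signed measure `m - f z • σ`, where `f = dm/dσ` is the density of
the absolutely continuous part of `m`. -/
noncomputable def deviationMeasure (m σ : Measure X) (z : X) : Measure X :=
  m.singularPart σ +
    σ.withDensity fun w => ‖(m.rnDeriv σ w).toReal - (m.rnDeriv σ z).toReal‖ₑ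

variable {m σ : Measure X}

lemma integral_deviationMeasure {g : X → ℝ} {z : X} (hg : Integrable g (deviationMeasure m σ z)) :
    ∫ w, g w ∂deviationMeasure m σ z = ∫ w, g w ∂m.singularPart σ +
      ∫ w, |(m.rnDeriv σ w).toReal - (m.rnDeriv σ z).toReal| * g w ∂σ := by
  rw [deviationMeasure, integral_add_measure hg.left_of_add_measure hg.right_of_add_measure,
    integral_withDensity_eq_integral_toReal_smul
      ((Measure.measurable_rnDeriv m σ).ennreal_toReal.sub_const _).enorm
      (.of_forall fun _ => enorm_lt_top)]
  simp only [toReal_enorm, Real.norm_eq_abs, smul_eq_mul]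

lemma abs_integral_sub_rnDeriv_mul_integral_le [SigmaFinite m] [SigmaFinite σ] {g : X → ℝ} {z : X}
    (hg : 0 ≤ g) (hgm : Integrable g m) (hgσ : Integrable g σ)
    (hgz : Integrable g (deviationMeasure m σ z)) :
    |∫ w, g w ∂m - (m.rnDeriv σ z).toReal * ∫ w, g w ∂σ| ≤
      ∫ w, g w ∂deviationMeasure m σ z := by
  set f : X → ℝ := fun w => (m.rnDeriv σ w).toReal
  have hac : Integrable g (σ.withDensity (m.rnDeriv σ)) :=
    hgm.mono_measure (Measure.withDensity_rnDeriv_le m σ)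
  have hfg : Integrable (fun w => f w * g w) σ :=
    (integrable_withDensity_iff_integrable_smul' (Measure.measurable_rnDeriv m σ)
      (Measure.rnDeriv_lt_top m σ)).1 hac
  have hlebesgue : ∫ w, g w ∂m = ∫ w, g w ∂m.singularPart σ + ∫ w, f w * g w ∂σ := by
    conv_lhs => rw [Measure.haveLebesgueDecomposition_add m σ]
    rw [integral_add_measure (hgm.mono_measure (Measure.singularPart_le m σ)) hac,
      integral_withDensity_eq_integral_toReal_smul (Measure.measurable_rnDeriv m σ)
        (Measure.rnDeriv_lt_top m σ)]
    rfl
  have hac_sub : ∫ w, f w * g w ∂σ - f z * ∫ w, g w ∂σ = ∫ w, (f w - f z) * g w ∂σ := by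
    simp only [sub_mul]
    rw [integral_sub hfg (hgσ.const_mul _), integral_const_mul]
  rw [hlebesgue, add_sub_assoc, hac_sub, integral_deviationMeasure hgz]
  refine (abs_add_le _ _).trans (add_le_add (abs_of_nonneg (integral_nonneg hg)).le ?_)
  refine abs_integral_le_integral_abs.trans_eq (integral_congr_ae (.of_forall fun w => ?_))
  simp only [abs_mul, abs_of_nonneg (hg w), f]

variable [IsFiniteMeasure m] [IsFiniteMeasure σ]

instance isFiniteMeasure_deviationMeasure (z : X) : IsFiniteMeasure (deviationMeasure m σ z) :=
  have : IsFiniteMeasure (σ.withDensity fun w =>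
      ‖(m.rnDeriv σ w).toReal - (m.rnDeriv σ z).toReal‖ₑ) :=
    isFiniteMeasure_withDensity (Measure.integrable_toReal_rnDeriv.sub (integrable_const _)).2.ne
  inferInstanceAs (IsFiniteMeasure (_ + _))

lemma ae_tendsto_deviationMeasure_closedBall_div [MetricSpace X] [SecondCountableTopology X]
    [BorelSpace X] [HasBesicovitchCovering X] :
    ∀ᵐ z ∂σ, Tendsto (fun r => (deviationMeasure m σ z).real (closedBall z r) /
      σ.real (closedBall z r)) (𝓝[>] 0) (𝓝 0) := by
  filter_upwards [(Besicovitch.vitaliFamily σ).ae_eventually_measure_zero_of_singular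
      (Measure.mutuallySingular_singularPart m σ),
    (Besicovitch.vitaliFamily σ).ae_tendsto_lintegral_enorm_sub_div_of_integrable
      (Measure.integrable_toReal_rnDeriv (μ := m))] with z hsing hleb
  have hsum := (hsing.add hleb).comp (Besicovitch.tendsto_filterAt σ z)
  rw [add_zero] at hsum
  refine ((ENNReal.tendsto_toReal ENNReal.zero_ne_top).comp hsum).congr fun r => ?_
  simp only [Function.comp_apply, measureReal_def, ← ENNReal.toReal_div, deviationMeasure,
    Measure.add_apply, withDensity_apply _ isClosed_closedBall.measurableSet, ENNReal.add_div]

variable [MetricSpace X] [OpensMeasurableSpace X] {k : ℕ} {z : X} {β : ℝ}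
  {ι : Type*} {l : Filter ι} {x : ι → X} {d : ι → ℝ}

lemma tendsto_cutoffPotential_div_cutoffPotential (hσ : IsAhlforsRegularAt σ k z)
    (hdev : Tendsto (fun r => (deviationMeasure m σ z).real (closedBall z r) /
      σ.real (closedBall z r)) (𝓝[>] 0) (𝓝 0)) (hβ : 0 ≤ β)
    (hd : Tendsto d l (𝓝[>] 0)) (hx : ∀ᶠ i in l, dist (x i) z ≤ β * d i) :
    Tendsto (fun i => cutoffPotential (k + 1) m (x i) (d i) /
      cutoffPotential (k + 1) σ (x i) (d i)) l (𝓝 (m.rnDeriv σ z).toReal) := by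
  obtain ⟨a, ha, hlower⟩ := hσ.exists_eventually_le_mul_cutoffPotential hβ hd hx
  have hzero :=
    (tendsto_mul_cutoffPotential (hσ.tendsto_measureReal_div_pow hdev) hd hx).div_const a
  rw [zero_div] at hzero
  refine tendsto_iff_dist_tendsto_zero.2 (squeeze_zero' (.of_forall fun _ => dist_nonneg) ?_ hzero)
  filter_upwards [hlower, hd.eventually self_mem_nhdsWithin] with i hai (hi : 0 < d i)
  set Pσ := cutoffPotential (k + 1) σ (x i) (d i)
  have hPσ : 0 < Pσ := pos_of_mul_pos_right (ha.trans_le hai) hi.le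
  have hdiff : |cutoffPotential (k + 1) m (x i) (d i) - (m.rnDeriv σ z).toReal * Pσ| ≤
      cutoffPotential (k + 1) (deviationMeasure m σ z) (x i) (d i) :=
    abs_integral_sub_rnDeriv_mul_integral_le (fun _ => cutoffKernel_nonneg)
      (integrable_cutoffKernel hi) (integrable_cutoffKernel hi) (integrable_cutoffKernel hi)
  rw [Real.dist_eq, div_sub' hPσ.ne', abs_div, abs_of_pos hPσ, mul_comm Pσ, div_le_div_iff₀ hPσ ha]
  calc _ ≤ cutoffPotential (k + 1) (deviationMeasure m σ z) (x i) (d i) * (d i * Pσ) :=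
        mul_le_mul hdiff hai ha.le cutoffPotential_nonneg
    _ = _ := by ring

end RelativeFatou

section SphereMeasure

open Module Submodule

open scoped RealInnerProductSpace

variable {E : Type*} [NormedAddCommGroup E] [InnerProductSpace ℝ E] {z : E} {r : ℝ}

lemma norm_add_smul_sq_of_mem_orthogonal (hz : ‖z‖ = 1) (y : (ℝ ∙ z)ᗮ) (t : ℝ) :
    ‖(y : E) + t • z‖ ^ 2 = ‖y‖ ^ 2 + t ^ 2 := by
  have hyz : ⟪(y : E), z⟫ = 0 := mem_orthogonal_singleton_iff_inner_left.1 y.2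
  rw [norm_add_sq_real, inner_smul_right, hyz, norm_smul, hz]
  simp

lemma coe_orthogonalProjectionOnto_orthogonal_singleton (hz : ‖z‖ = 1) (w : E) :
    ((ℝ ∙ z)ᗮ.orthogonalProjectionOnto w : E) = w - ⟪w, z⟫ • z := by
  rw [real_inner_comm, ← starProjection_unit_singleton ℝ hz w]
  exact starProjection_orthogonal_val w

/-- The upper unit hemisphere with pole `z`, as a graph over the hyperplane orthogonal to `z`. -/
noncomputable def hemisphereGraph (z : E) (y : (ℝ ∙ z)ᗮ) : E :=
  y + √(1 - ‖y‖ ^ 2) • z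

lemma norm_hemisphereGraph (hz : ‖z‖ = 1) {y : (ℝ ∙ z)ᗮ} (hy : ‖y‖ ≤ 1) :
    ‖hemisphereGraph z y‖ = 1 := by
  have hsq : 0 ≤ 1 - ‖y‖ ^ 2 := sub_nonneg.2 (pow_le_one₀ (norm_nonneg y) hy)
  rw [← sq_eq_sq₀ (norm_nonneg _) zero_le_one, hemisphereGraph,
    norm_add_smul_sq_of_mem_orthogonal hz, Real.sq_sqrt hsq]
  ring

lemma dist_hemisphereGraph_le (hz : ‖z‖ = 1) {y : (ℝ ∙ z)ᗮ} (hy : ‖y‖ ≤ 1) :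
    dist (hemisphereGraph z y) z ≤ 2 * ‖y‖ := by
  have hsq : 0 ≤ 1 - ‖y‖ ^ 2 := sub_nonneg.2 (pow_le_one₀ (norm_nonneg y) hy)
  have hle : 1 - ‖y‖ ^ 2 ≤ √(1 - ‖y‖ ^ 2) :=
    Real.le_sqrt_of_sq_le (by nlinarith [sq_nonneg ‖y‖])
  have hsub : hemisphereGraph z y - z = (y : E) + (√(1 - ‖y‖ ^ 2) - 1) • z := by
    rw [hemisphereGraph, sub_smul, one_smul, add_sub_assoc]
  rw [dist_eq_norm, hsub, ← sq_le_sq₀ (norm_nonneg _) (by positivity),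
    norm_add_smul_sq_of_mem_orthogonal hz]
  nlinarith [Real.sq_sqrt hsq, sq_nonneg ‖y‖]

lemma orthogonalProjectionOnto_hemisphereGraph (y : (ℝ ∙ z)ᗮ) :
    (ℝ ∙ z)ᗮ.orthogonalProjectionOnto (hemisphereGraph z y) = y := by
  have hmem : √(1 - ‖y‖ ^ 2) • z ∈ (ℝ ∙ z)ᗮᗮ :=
    le_orthogonal_orthogonal _ (smul_mem _ _ (mem_span_singleton_self z))
  rw [hemisphereGraph, map_add, orthogonalProjectionOnto_apply_of_mem_orthogonal hmem, add_zero]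
  simp

lemma hemisphereGraph_orthogonalProjectionOnto (hz : ‖z‖ = 1) {w : E} (hw : ‖w‖ = 1)
    (hwz : 0 ≤ ⟪w, z⟫) :
    hemisphereGraph z ((ℝ ∙ z)ᗮ.orthogonalProjectionOnto w) = w := by
  have hnorm := norm_add_smul_sq_of_mem_orthogonal hz
    ((ℝ ∙ z)ᗮ.orthogonalProjectionOnto w) ⟪w, z⟫
  rw [coe_orthogonalProjectionOnto_orthogonal_singleton hz, sub_add_cancel, hw] at hnorm
  have hsq : 1 - ‖(ℝ ∙ z)ᗮ.orthogonalProjectionOnto w‖ ^ 2 = ⟪w, z⟫ ^ 2 := by linarith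
  rw [hemisphereGraph, hsq, Real.sqrt_sq hwz,
    coe_orthogonalProjectionOnto_orthogonal_singleton hz, sub_add_cancel]

lemma abs_sqrt_one_sub_sq_sub_le {s t : ℝ} (hs₀ : 0 ≤ s) (hs : s ≤ 1 / 2) (ht₀ : 0 ≤ t)
    (ht : t ≤ 1 / 2) : |√(1 - s ^ 2) - √(1 - t ^ 2)| ≤ |s - t| := by
  have hs' : 1 / 2 ≤ √(1 - s ^ 2) := Real.le_sqrt_of_sq_le (by nlinarith)
  have ht' : 1 / 2 ≤ √(1 - t ^ 2) := Real.le_sqrt_of_sq_le (by nlinarith)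
  have hfactor : (√(1 - s ^ 2) - √(1 - t ^ 2)) * (√(1 - s ^ 2) + √(1 - t ^ 2)) =
      (t - s) * (t + s) := by
    linear_combination Real.sq_sqrt (show 0 ≤ 1 - s ^ 2 by nlinarith) -
      Real.sq_sqrt (show 0 ≤ 1 - t ^ 2 by nlinarith)
  have habs := congrArg abs hfactor
  rw [abs_mul, abs_mul, abs_of_nonneg (by positivity : 0 ≤ t + s), abs_sub_comm t,
    abs_of_nonneg (by positivity : 0 ≤ √(1 - s ^ 2) + √(1 - t ^ 2))] at habs
  nlinarith [abs_nonneg (√(1 - s ^ 2) - √(1 - t ^ 2)), abs_nonneg (s - t)]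

lemma lipschitzOnWith_hemisphereGraph (hz : ‖z‖ = 1) :
    LipschitzOnWith 2 (hemisphereGraph z) (closedBall 0 (1 / 2)) := by
  refine .of_dist_le_mul fun y hy y' hy' => ?_
  rw [mem_closedBall_zero_iff] at hy hy'
  have hsub : hemisphereGraph z y - hemisphereGraph z y' =
      ((y - y' : (ℝ ∙ z)ᗮ) : E) + (√(1 - ‖y‖ ^ 2) - √(1 - ‖y'‖ ^ 2)) • z := by
    rw [hemisphereGraph, hemisphereGraph, sub_smul, AddSubgroupClass.coe_sub]
    abel
  have hheight : |√(1 - ‖y‖ ^ 2) - √(1 - ‖y'‖ ^ 2)| ≤ ‖y - y'‖ :=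
    (abs_sqrt_one_sub_sq_sub_le (norm_nonneg y) hy (norm_nonneg y') hy').trans
      (abs_norm_sub_norm_le y y')
  rw [dist_eq_norm, dist_eq_norm, hsub, NNReal.coe_ofNat,
    ← sq_le_sq₀ (norm_nonneg _) (by positivity), norm_add_smul_sq_of_mem_orthogonal hz]
  nlinarith [sq_le_sq' (neg_le_of_abs_le hheight) (le_of_abs_le hheight), sq_nonneg ‖y - y'‖]

lemma closedBall_subset_orthogonalProjectionOnto_image (hz : ‖z‖ = 1) (hr : r ≤ 2) :
    closedBall 0 (r / 2) ⊆
      (ℝ ∙ z)ᗮ.orthogonalProjectionOnto '' (closedBall z r ∩ sphere 0 1) := by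
  intro y hy
  rw [mem_closedBall_zero_iff] at hy
  have hy1 : ‖y‖ ≤ 1 := by linarith
  refine ⟨hemisphereGraph z y, ⟨?_, ?_⟩, orthogonalProjectionOnto_hemisphereGraph y⟩
  · exact mem_closedBall.2 ((dist_hemisphereGraph_le hz hy1).trans (by linarith))
  · exact mem_sphere_zero_iff_norm.2 (norm_hemisphereGraph hz hy1)

lemma closedBall_inter_sphere_subset_hemisphereGraph_image (hz : ‖z‖ = 1) (hr : r ≤ 1) :
    closedBall z r ∩ sphere 0 1 ⊆ hemisphereGraph z '' closedBall 0 r := by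
  rintro w ⟨hwr, hw⟩
  rw [mem_closedBall, dist_eq_norm] at hwr
  rw [mem_sphere_zero_iff_norm] at hw
  have hwz : 0 ≤ ⟪w, z⟫ := by
    have hsq := norm_sub_sq_real w z
    rw [hz, hw] at hsq
    nlinarith [norm_nonneg (w - z)]
  refine ⟨_, ?_, hemisphereGraph_orthogonalProjectionOnto hz hw hwz⟩
  have hzero : (ℝ ∙ z)ᗮ.orthogonalProjectionOnto z = 0 :=
    orthogonalProjectionOnto_apply_of_mem_orthogonal
      (le_orthogonal_orthogonal _ (mem_span_singleton_self z))
  rw [mem_closedBall_zero_iff, ← sub_zero ((ℝ ∙ z)ᗮ.orthogonalProjectionOnto w), ← hzero,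
    ← map_sub]
  exact (norm_orthogonalProjectionOnto_apply_le _ _).trans hwr

lemma finrank_orthogonal_singleton_eq {k : ℕ} (hE : finrank ℝ E = k + 1) (hz : ‖z‖ = 1) :
    finrank ℝ (ℝ ∙ z)ᗮ = k :=
  have : Fact (finrank ℝ E = k + 1) := ⟨hE⟩
  finrank_orthogonal_span_singleton (ne_zero_of_norm_ne_zero (by simp [hz]))

variable [MeasurableSpace E] [BorelSpace E] {k : ℕ}

lemma le_hausdorffMeasure_closedBall_inter_sphere (hz : ‖z‖ = 1) (hr : r ≤ 2) :
    μH[k] (closedBall (0 : (ℝ ∙ z)ᗮ) (r / 2)) ≤ μH[k] (closedBall z r ∩ sphere (0 : E) 1) := by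
  have hlip : LipschitzWith 1 (ℝ ∙ z)ᗮ.orthogonalProjectionOnto :=
    .of_dist_le_mul fun w w' => by
      rw [dist_eq_norm, dist_eq_norm, ← map_sub, NNReal.coe_one, one_mul]
      exact norm_orthogonalProjectionOnto_apply_le _ _
  calc _ ≤ _ := measure_mono (closedBall_subset_orthogonalProjectionOnto_image hz hr)
    _ ≤ _ := hlip.hausdorffMeasure_image_le k.cast_nonneg _
    _ = _ := by simp

lemma hausdorffMeasure_closedBall_inter_sphere_le (hz : ‖z‖ = 1) (hr : r ≤ 1 / 2) :
    μH[k] (closedBall z r ∩ sphere (0 : E) 1) ≤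
      2 ^ k * μH[k] (closedBall (0 : (ℝ ∙ z)ᗮ) r) :=
  calc _ ≤ _ := measure_mono
        (closedBall_inter_sphere_subset_hemisphereGraph_image hz (by linarith))
    _ ≤ _ := ((lipschitzOnWith_hemisphereGraph hz).mono
        (closedBall_subset_closedBall hr)).hausdorffMeasure_image_le k.cast_nonneg
    _ = _ := by simp

variable [FiniteDimensional ℝ E]

lemma hausdorffMeasure_closedBall_orthogonal (hE : finrank ℝ E = k + 1) (hz : ‖z‖ = 1)
    (hr : 0 ≤ r) :
    μH[k] (closedBall (0 : (ℝ ∙ z)ᗮ) r) =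
      ENNReal.ofReal (r ^ k) * μH[k] (ball (0 : (ℝ ∙ z)ᗮ) 1) := by
  have hk := finrank_orthogonal_singleton_eq hE hz
  subst hk
  exact Measure.addHaar_closedBall _ _ hr

lemma hausdorffMeasure_ball_orthogonal_ne_top (hE : finrank ℝ E = k + 1) (hz : ‖z‖ = 1) :
    μH[k] (ball (0 : (ℝ ∙ z)ᗮ) 1) ≠ ⊤ := by
  have hk := finrank_orthogonal_singleton_eq hE hz
  subst hk
  exact measure_ball_ne_top

lemma hausdorffMeasure_ball_orthogonal_ne_zero (hE : finrank ℝ E = k + 1) (hz : ‖z‖ = 1) :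
    μH[k] (ball (0 : (ℝ ∙ z)ᗮ) 1) ≠ 0 := by
  have hk := finrank_orthogonal_singleton_eq hE hz
  subst hk
  exact (measure_ball_pos _ _ one_pos).ne'

lemma isFiniteMeasure_hausdorffMeasure_restrict_sphere (hE : finrank ℝ E = k + 1) :
    IsFiniteMeasure (μH[k].restrict (sphere (0 : E) 1)) := by
  refine ⟨?_⟩
  rw [Measure.restrict_apply_univ]
  refine (isCompact_sphere 0 1).measure_lt_top_of_nhdsWithin fun z hz => ?_
  rw [mem_sphere_zero_iff_norm] at hz
  refine ⟨closedBall z (1 / 2) ∩ sphere 0 1, inter_mem (mem_nhdsWithin_of_mem_nhds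
    (closedBall_mem_nhds z (by norm_num))) self_mem_nhdsWithin, ?_⟩
  refine (hausdorffMeasure_closedBall_inter_sphere_le hz le_rfl).trans_lt ?_
  rw [hausdorffMeasure_closedBall_orthogonal hE hz (by norm_num)]
  exact ENNReal.mul_lt_top (ENNReal.pow_lt_top ENNReal.ofNat_lt_top)
    (ENNReal.mul_lt_top ENNReal.ofReal_lt_top
      (hausdorffMeasure_ball_orthogonal_ne_top hE hz).lt_top)

lemma isAhlforsRegularAt_sphere (hE : finrank ℝ E = k + 1) (hz : ‖z‖ = 1) :
    IsAhlforsRegularAt (μH[k].restrict (sphere (0 : E) 1)) k z := by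
  have := isFiniteMeasure_hausdorffMeasure_restrict_sphere hE
  set σ := μH[k].restrict (sphere (0 : E) 1)
  have hb := hausdorffMeasure_ball_orthogonal_ne_top hE hz
  set b := μH[k] (ball (0 : (ℝ ∙ z)ᗮ) 1)
  have hσ (r : ℝ) : σ (closedBall z r) = μH[k] (closedBall z r ∩ sphere (0 : E) 1) :=
    Measure.restrict_apply isClosed_closedBall.measurableSet
  refine ⟨b.toReal / 2 ^ k, div_pos (ENNReal.toReal_pos
    (hausdorffMeasure_ball_orthogonal_ne_zero hE hz) hb) (by positivity), 2 ^ k * b.toReal, ?_⟩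
  filter_upwards [Ioc_mem_nhdsGT (show (0 : ℝ) < 1 / 2 by norm_num)] with r ⟨hr₀, hr⟩
  have hlower := le_hausdorffMeasure_closedBall_inter_sphere (k := k) hz (r := r) (by linarith)
  have hupper := hausdorffMeasure_closedBall_inter_sphere_le (k := k) hz hr
  rw [hausdorffMeasure_closedBall_orthogonal hE hz (by positivity), ← hσ] at hlower hupper
  constructor
  · have := ENNReal.toReal_mono (measure_ne_top σ _) hlower
    rw [ENNReal.toReal_mul, ENNReal.toReal_ofReal (by positivity), div_pow] at this
    exact (by ring : _ = _).trans_le this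
  · have := ENNReal.toReal_mono (by finiteness) hupper
    rw [ENNReal.toReal_mul, ENNReal.toReal_mul, ENNReal.toReal_ofReal (by positivity),
      ENNReal.toReal_pow, ENNReal.toReal_ofNat] at this
    exact this.trans_eq (by ring)

end SphereMeasure

section InversePowerKernel

variable {E : Type*} [NormedAddCommGroup E] {n : ℕ} {x w : E} {r d : ℝ}

lemma inv_dist_pow_le_of_norm_le_half (hw : w ≠ 0) (hx : ‖x‖ ≤ ‖w‖ / 2) :
    (dist x w ^ n)⁻¹ ≤ 2 ^ n * (‖w‖ ^ n)⁻¹ := by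
  have : 0 < ‖w‖ := norm_pos_iff.2 hw
  have hdist : ‖w‖ / 2 ≤ dist x w := by
    rw [dist_comm, dist_eq_norm]
    linarith [norm_sub_norm_le w x]
  calc (dist x w ^ n)⁻¹ ≤ ((‖w‖ / 2) ^ n)⁻¹ := by gcongr
    _ = 2 ^ n * (‖w‖ ^ n)⁻¹ := by rw [div_pow, inv_div, div_eq_mul_inv]

variable [MeasurableSpace E] {ρ : Measure E}

lemma cutoffPotential_restrict_of_ae_le_dist {s : Set E} (h : ∀ᵐ w ∂ρ, d ≤ dist x w) :
    cutoffPotential n (ρ.restrict s) x d = ∫ w in s, (dist x w ^ n)⁻¹ ∂ρ :=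
  integral_congr_ae (ae_restrict_of_ae (h.mono fun _ => cutoffKernel_of_le_dist))

lemma measure_closedBall_le_of_integrable_inv_norm_pow (hρ : ∀ᵐ w ∂ρ, w ≠ 0)
    (hint : Integrable (fun w => (‖w‖ ^ n)⁻¹) ρ) (hr : 0 < r) :
    ρ (closedBall 0 r) ≤ ENNReal.ofReal (r ^ n * ∫ w, (‖w‖ ^ n)⁻¹ ∂ρ) := by
  have hsub : closedBall 0 r ≤ᵐ[ρ] {w | (r ^ n)⁻¹ ≤ (‖w‖ ^ n)⁻¹} := by
    filter_upwards [hρ] with w hw hwr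
    have : 0 < ‖w‖ := norm_pos_iff.2 hw
    have hwr' : ‖w‖ ≤ r := mem_closedBall_zero_iff.1 hwr
    change (r ^ n)⁻¹ ≤ (‖w‖ ^ n)⁻¹
    gcongr
  have hmarkov := mul_meas_ge_le_integral_of_nonneg
    (.of_forall fun w => by positivity) hint (r ^ n)⁻¹
  rw [inv_mul_le_iff₀ (by positivity)] at hmarkov
  exact (measure_mono_ae hsub).trans ((ENNReal.le_ofReal_iff_toReal_le
    (hint.measure_ge_lt_top (by positivity)).ne (by positivity)).2 hmarkov)

variable [OpensMeasurableSpace E]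

lemma setIntegral_compl_closedBall_inv_dist_pow_le (hint : Integrable (fun w => (‖w‖ ^ n)⁻¹) ρ)
    (hx : ‖x‖ ≤ r / 2) :
    ∫ w in (closedBall 0 r)ᶜ, (dist x w ^ n)⁻¹ ∂ρ ≤ 2 ^ n * ∫ w, (‖w‖ ^ n)⁻¹ ∂ρ :=
  calc ∫ w in (closedBall 0 r)ᶜ, (dist x w ^ n)⁻¹ ∂ρ
      ≤ ∫ w in (closedBall 0 r)ᶜ, 2 ^ n * (‖w‖ ^ n)⁻¹ ∂ρ := by
        refine integral_mono_of_nonneg (.of_forall fun w => by positivity)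
          (hint.integrableOn.const_mul _) ?_
        filter_upwards [ae_restrict_mem isClosed_closedBall.measurableSet.compl] with w hw
        have hrw : r < ‖w‖ := not_le.1 fun h => hw (mem_closedBall_zero_iff.2 h)
        have hw₀ : 0 < ‖w‖ := by linarith [norm_nonneg x]
        exact inv_dist_pow_le_of_norm_le_half (norm_pos_iff.1 hw₀) (by linarith)
    _ ≤ ∫ w, 2 ^ n * (‖w‖ ^ n)⁻¹ ∂ρ :=
        setIntegral_le_integral (hint.const_mul _) (.of_forall fun w => by positivity)
    _ = 2 ^ n * ∫ w, (‖w‖ ^ n)⁻¹ ∂ρ := integral_const_mul _ _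

end InversePowerKernel

section WeakLimit

variable {X ι : Type*} [MeasurableSpace X] {l : Filter ι} {m : ι → FiniteMeasure X}

lemma tendsto_cutoffPotential_of_tendsto [PseudoMetricSpace X] [OpensMeasurableSpace X]
    {μ : FiniteMeasure X} (hm : Tendsto m l (𝓝 μ)) (n : ℕ) (x : X) {d : ℝ} (hd : 0 < d) :
    Tendsto (fun i => cutoffPotential n (m i) x d) l (𝓝 (cutoffPotential n μ x d)) :=
  FiniteMeasure.tendsto_iff_forall_integral_tendsto.1 hm
    (.ofNormedAddCommGroup (cutoffKernel n d x) (continuous_cutoffKernel hd) _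
      fun _ => norm_cutoffKernel_le hd)

lemma exists_ultrafilter_tendsto_finiteMeasure [TopologicalSpace X] [T2Space X] [BorelSpace X]
    [l.NeBot] {S : Set X} (hS : IsCompact S) {M : NNReal}
    (hmass : ∀ i, (m i).mass ≤ M) (hsupp : ∀ i, m i Sᶜ = 0) :
    ∃ U : Ultrafilter ι, ↑U ≤ l ∧ ∃ μ, Tendsto m U (𝓝 μ) := by
  have hcompact := isCompact_setOfPred_finiteMeasure_le_of_isCompact M hS
  obtain ⟨μ, -, hμ⟩ := hcompact.ultrafilter_le_nhds' ((Ultrafilter.of l).map m)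
    (Ultrafilter.mem_map.2 (Filter.univ_mem' fun i => ⟨hmass i, hsupp i⟩))
  exact ⟨.of l, Ultrafilter.of_le l, μ, hμ⟩

end WeakLimit

section PoissonIntegral

variable {n : ℕ} {α R : ℝ} {u : EuclideanSpace ℝ (Fin n) → ℝ} {x : EuclideanSpace ℝ (Fin n)}

/-- The part of the Poisson integral of `u` over the exterior of the ball `B(0, R)` which does not
depend on the point `x` at which the integral is evaluated. -/
noncomputable def exteriorDensity (n : ℕ) (α R : ℝ) (u : EuclideanSpace ℝ (Fin n) → ℝ)
    (v : EuclideanSpace ℝ (Fin n)) : ℝ :=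
  Real.Gamma (n / 2) * Real.pi ^ (-(n : ℝ) / 2 - 1) * Real.sin (Real.pi * α / 2) *
    ((‖v‖ ^ 2 - R ^ 2) ^ (α / 2))⁻¹ * u v

/-- The measure on the exterior of `B(0, R)` whose potential for the kernel `|x - v|⁻ⁿ` is, up to
the factor `(R² - |x|²)^{α/2}`, the Poisson integral of `u` over that exterior. -/
noncomputable def exteriorMeasure (n : ℕ) (α R : ℝ) (u : EuclideanSpace ℝ (Fin n) → ℝ) :
    Measure (EuclideanSpace ℝ (Fin n)) :=
  (volume.restrict {v | R < dist v 0}).withDensity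
    fun v => ENNReal.ofReal (exteriorDensity n α R u v)

lemma measurableSet_setOf_lt_dist_zero :
    MeasurableSet {v : EuclideanSpace ℝ (Fin n) | R < dist v 0} :=
  measurableSet_lt measurable_const (by fun_prop)

lemma ae_exteriorMeasure_lt_norm : ∀ᵐ v ∂exteriorMeasure n α R u, R < ‖v‖ := by
  refine (withDensity_absolutelyContinuous _ _).ae_le ?_
  filter_upwards [ae_restrict_mem measurableSet_setOf_lt_dist_zero] with v hv
  rwa [← dist_zero_right]

lemma measurable_exteriorDensity (hu : Measurable u) : Measurable (exteriorDensity n α R u) := by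
  unfold exteriorDensity
  fun_prop

lemma exteriorDensity_nonneg (hα : α ∈ Ioo 0 2) (hu : ∀ v, 0 ≤ u v) (hR : 0 ≤ R)
    {v : EuclideanSpace ℝ (Fin n)} (hv : R < ‖v‖) : 0 ≤ exteriorDensity n α R u v := by
  have hsin : 0 ≤ Real.sin (Real.pi * α / 2) :=
    Real.sin_nonneg_of_nonneg_of_le_pi (by have := hα.1; positivity)
      (by nlinarith [hα.2, Real.pi_pos])
  have : 0 ≤ Real.Gamma (n / 2) := Real.Gamma_nonneg_of_nonneg (by positivity)
  have hsq : 0 ≤ ‖v‖ ^ 2 - R ^ 2 := by nlinarith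
  have := hu v
  unfold exteriorDensity
  positivity

lemma stablePoissonKernel_mul_eq (hR : 0 ≤ R) (hx : ‖x‖ ≤ R) {v : EuclideanSpace ℝ (Fin n)}
    (hv : R ≤ ‖v‖) :
    stablePoissonKernel n α 0 R x v * u v =
      (R ^ 2 - ‖x‖ ^ 2) ^ (α / 2) * (exteriorDensity n α R u v * (dist x v ^ n)⁻¹) := by
  have hxR : 0 ≤ R ^ 2 - ‖x‖ ^ 2 := by nlinarith [norm_nonneg x]
  have hvR : 0 ≤ ‖v‖ ^ 2 - R ^ 2 := by nlinarith
  rw [stablePoissonKernel, exteriorDensity, dist_zero_right, dist_zero_right,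
    Real.div_rpow hxR hvR, Real.rpow_neg dist_nonneg, Real.rpow_natCast, div_eq_mul_inv]
  ring

lemma IsAlphaHarmonic.integrable_inv_dist_pow_and_integral_eq
    (hu : IsAlphaHarmonic n α (ball 0 1) u) (hα : α ∈ Ioo 0 2) (hR₁ : R < 1) (hx : ‖x‖ < R) :
    Integrable (fun v => (dist x v ^ n)⁻¹) (exteriorMeasure n α R u) ∧
      ∫ v, (dist x v ^ n)⁻¹ ∂exteriorMeasure n α R u = u x / (R ^ 2 - ‖x‖ ^ 2) ^ (α / 2) := by
  obtain ⟨hmeas, hpos, -, hP⟩ := hu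
  have hR : 0 < R := (norm_nonneg x).trans_lt hx
  obtain ⟨hint, heq⟩ := hP 0 R hR (closedBall_subset_ball hR₁) x (mem_ball_zero_iff.2 hx)
  have hq : 0 < (R ^ 2 - ‖x‖ ^ 2) ^ (α / 2) :=
    Real.rpow_pos_of_pos (by nlinarith [norm_nonneg x]) _
  have hfactor : ∀ v ∈ {v : EuclideanSpace ℝ (Fin n) | R < dist v 0},
      stablePoissonKernel n α 0 R x v * u v = (R ^ 2 - ‖x‖ ^ 2) ^ (α / 2) *
        ((ENNReal.ofReal (exteriorDensity n α R u v)).toReal • (dist x v ^ n)⁻¹) := by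
    intro v hv
    rw [mem_ofPred_eq, dist_zero_right] at hv
    rw [ENNReal.toReal_ofReal (exteriorDensity_nonneg hα hpos hR.le hv), smul_eq_mul,
      stablePoissonKernel_mul_eq hR.le hx.le hv.le]
  have hdens : Measurable fun v => ENNReal.ofReal (exteriorDensity n α R u v) :=
    (measurable_exteriorDensity hmeas).ennreal_ofReal
  constructor
  · rw [exteriorMeasure, integrable_withDensity_iff_integrable_smul' hdens
      (.of_forall fun _ => ENNReal.ofReal_lt_top)]
    exact (integrable_const_mul_iff hq.ne'.isUnit _).1
      (hint.congr_fun hfactor measurableSet_setOf_lt_dist_zero)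
  · rw [exteriorMeasure, integral_withDensity_eq_integral_toReal_smul hdens
      (.of_forall fun _ => ENNReal.ofReal_lt_top), eq_div_iff hq.ne', mul_comm,
      ← integral_const_mul, ← heq]
    exact (setIntegral_congr_fun measurableSet_setOf_lt_dist_zero hfactor).symm

-- `R > 1/2` gives `(R²)^{α/2} ≥ (1/4)^{α/2}`, whence the denominator.
lemma IsAlphaHarmonic.integrable_inv_norm_pow_and_integral_le
    (hu : IsAlphaHarmonic n α (ball 0 1) u) (hα : α ∈ Ioo 0 2) (hR : R ∈ Ioo (1 / 2) 1) :
    Integrable (fun v => (‖v‖ ^ n)⁻¹) (exteriorMeasure n α R u) ∧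
      ∫ v, (‖v‖ ^ n)⁻¹ ∂exteriorMeasure n α R u ≤ u 0 / (1 / 4) ^ (α / 2) := by
  have hR₀ : ‖(0 : EuclideanSpace ℝ (Fin n))‖ < R := by
    rw [norm_zero]
    linarith [hR.1]
  obtain ⟨hint, heq⟩ := hu.integrable_inv_dist_pow_and_integral_eq hα hR.2 hR₀
  simp only [dist_zero_left] at hint heq
  refine ⟨hint, heq.trans_le ?_⟩
  have := hu.2.1 0
  have := hα.1
  gcongr
  rw [norm_zero]
  nlinarith [hR.1]

lemma IsAlphaHarmonic.exteriorMeasure_restrict_bounds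
    (hu : IsAlphaHarmonic n α (ball 0 1) u) (hα : α ∈ Ioo 0 2) (hR : R ∈ Ioo (1 / 2) 1)
    (hx : (1 + ‖x‖) / 2 ≤ R) :
    cutoffPotential n ((exteriorMeasure n α R u).restrict (closedBall 0 2)) x ((1 - ‖x‖) / 2) ≤
        u x / (R ^ 2 - ‖x‖ ^ 2) ^ (α / 2) ∧
      u x / (R ^ 2 - ‖x‖ ^ 2) ^ (α / 2) ≤
        cutoffPotential n ((exteriorMeasure n α R u).restrict (closedBall 0 2)) x
          ((1 - ‖x‖) / 2) + 2 ^ n * (u 0 / (1 / 4) ^ (α / 2)) := by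
  have hx₁ : ‖x‖ < 1 := by linarith [hR.2]
  obtain ⟨hint, heq⟩ := hu.integrable_inv_dist_pow_and_integral_eq hα hR.2
    (show ‖x‖ < R by linarith)
  obtain ⟨hint₀, hle₀⟩ := hu.integrable_inv_norm_pow_and_integral_le hα hR
  have hdist : ∀ᵐ v ∂exteriorMeasure n α R u, (1 - ‖x‖) / 2 ≤ dist x v := by
    filter_upwards [ae_exteriorMeasure_lt_norm] with v hv
    rw [dist_comm, dist_eq_norm]
    linarith [norm_sub_norm_le v x]
  rw [cutoffPotential_restrict_of_ae_le_dist hdist, ← heq]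
  constructor
  · exact setIntegral_le_integral hint (.of_forall fun _ => by positivity)
  · rw [← integral_add_compl isClosed_closedBall.measurableSet hint]
    gcongr
    exact (setIntegral_compl_closedBall_inv_dist_pow_le hint₀ (by linarith)).trans (by gcongr)

lemma IsAlphaHarmonic.exists_finiteMeasure_coe_eq_exteriorMeasure_restrict
    (hu : IsAlphaHarmonic n α (ball 0 1) u) (hα : α ∈ Ioo 0 2) (hR : R ∈ Ioo (1 / 2) 1) :
    ∃ m : FiniteMeasure (EuclideanSpace ℝ (Fin n)),
      (m : Measure _) = (exteriorMeasure n α R u).restrict (closedBall 0 2) ∧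
      m.mass ≤ (2 ^ n * (u 0 / (1 / 4) ^ (α / 2))).toNNReal ∧ m (closedBall 0 2)ᶜ = 0 := by
  obtain ⟨hint₀, hle₀⟩ := hu.integrable_inv_norm_pow_and_integral_le hα hR
  have hne : ∀ᵐ v ∂exteriorMeasure n α R u, v ≠ 0 :=
    ae_exteriorMeasure_lt_norm.mono fun v hv => norm_pos_iff.1 (by linarith [hR.1])
  have hmass : (exteriorMeasure n α R u).restrict (closedBall 0 2) univ ≤
      ENNReal.ofReal (2 ^ n * (u 0 / (1 / 4) ^ (α / 2))) := by
    rw [Measure.restrict_apply_univ]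
    exact (measure_closedBall_le_of_integrable_inv_norm_pow hne hint₀ two_pos).trans (by gcongr)
  refine ⟨⟨_, ⟨hmass.trans_lt ENNReal.ofReal_lt_top⟩⟩, rfl, ?_, ?_⟩
  · exact ENNReal.toNNReal_mono ENNReal.ofReal_ne_top hmass
  · exact (FiniteMeasure.null_iff_toMeasure_null _ _).2 <|
      (Measure.restrict_apply isClosed_closedBall.measurableSet.compl).trans (by simp)

lemma tendsto_div_sq_sub_sq_rpow (a : ℝ) {t s : ℝ} (ht : t ^ 2 < 1) :
    Tendsto (fun R : ℝ => a / (R ^ 2 - t ^ 2) ^ s) (𝓝 1) (𝓝 (a / (1 - t ^ 2) ^ s)) := by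
  have hpos : 0 < (1 : ℝ) ^ 2 - t ^ 2 := by linarith
  have hcont : ContinuousAt (fun R : ℝ => a / (R ^ 2 - t ^ 2) ^ s) 1 :=
    continuousAt_const.div (ContinuousAt.rpow_const (by fun_prop) (.inl hpos.ne'))
      (Real.rpow_pos_of_pos hpos s).ne'
  simpa only [one_pow] using hcont.tendsto

theorem IsAlphaHarmonic.exists_finiteMeasure_cutoffPotential_bounds
    (hu : IsAlphaHarmonic n α (ball 0 1) u) (hα : α ∈ Ioo 0 2) :
    ∃ (m : FiniteMeasure (EuclideanSpace ℝ (Fin n))) (K : ℝ), ∀ x, ‖x‖ < 1 →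
      cutoffPotential n m x ((1 - ‖x‖) / 2) ≤ u x / (1 - ‖x‖ ^ 2) ^ (α / 2) ∧
      u x / (1 - ‖x‖ ^ 2) ^ (α / 2) ≤ cutoffPotential n m x ((1 - ‖x‖) / 2) + K := by
  obtain ⟨R, -, hR, hR₁⟩ := exists_seq_strictMono_tendsto' (one_half_lt_one (α := ℝ))
  choose m hm hmass hsupp using fun j =>
    hu.exists_finiteMeasure_coe_eq_exteriorMeasure_restrict hα (hR j)
  obtain ⟨U, hU, μ, hμ⟩ := exists_ultrafilter_tendsto_finiteMeasure (l := atTop)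
    (isCompact_closedBall 0 2) hmass hsupp
  refine ⟨μ, 2 ^ n * (u 0 / (1 / 4) ^ (α / 2)), fun x hx => ?_⟩
  have hpot := tendsto_cutoffPotential_of_tendsto hμ n x (d := (1 - ‖x‖) / 2) (by linarith)
  have hlim := ((tendsto_div_sq_sub_sq_rpow (u x) (s := α / 2)
    (pow_lt_one₀ (norm_nonneg x) hx two_ne_zero)).comp hR₁).mono_left hU
  have hbounds : ∀ᶠ j in (U : Filter ℕ), cutoffPotential n (m j) x ((1 - ‖x‖) / 2) ≤
      u x / (R j ^ 2 - ‖x‖ ^ 2) ^ (α / 2) ∧ u x / (R j ^ 2 - ‖x‖ ^ 2) ^ (α / 2) ≤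
        cutoffPotential n (m j) x ((1 - ‖x‖) / 2) + 2 ^ n * (u 0 / (1 / 4) ^ (α / 2)) := by
    filter_upwards [hU (hR₁.eventually_const_le (show (1 + ‖x‖) / 2 < 1 by linarith))] with j hj
    rw [hm]
    exact hu.exteriorMeasure_restrict_bounds hα (hR j) hj
  exact ⟨le_of_tendsto_of_tendsto hpot hlim (hbounds.mono fun _ => And.left),
    le_of_tendsto_of_tendsto hlim (hpot.add_const _) (hbounds.mono fun _ => And.right)⟩

end PoissonIntegral

section StolzSet

variable {n : ℕ} {β : ℝ} {x z : EuclideanSpace ℝ (Fin n)}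

lemma norm_lt_one_of_mem_stolzSet (hx : x ∈ stolzSet n β z) : ‖x‖ < 1 :=
  mem_ball_zero_iff.1 hx.1

lemma dist_le_of_mem_stolzSet (hx : x ∈ stolzSet n β z) :
    dist x z ≤ 2 * β * ((1 - ‖x‖) / 2) := by
  linarith [hx.2.2]

lemma tendsto_height_nhdsWithin_stolzSet (hz : ‖z‖ = 1) :
    Tendsto (fun x => (1 - ‖x‖) / 2) (𝓝[stolzSet n β z] z) (𝓝[>] 0) := by
  refine tendsto_nhdsWithin_iff.2 ⟨tendsto_nhdsWithin_of_tendsto_nhds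
    (Continuous.tendsto' (by fun_prop) _ _ (by simp [hz])), ?_⟩
  filter_upwards [self_mem_nhdsWithin] with x hx
  exact half_pos (sub_pos.2 (norm_lt_one_of_mem_stolzSet hx))

lemma neBot_nhdsWithin_stolzSet (hβ : 1 < β) (hz : ‖z‖ = 1) : (𝓝[stolzSet n β z] z).NeBot := by
  have hradial : Tendsto (fun t : ℝ => t • z) (𝓝[<] 1) (𝓝 z) :=
    tendsto_nhdsWithin_of_tendsto_nhds (Continuous.tendsto' (by fun_prop) _ _ (one_smul ℝ z))
  refine (tendsto_nhdsWithin_iff.2 ⟨hradial, ?_⟩).neBot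
  filter_upwards [Ioo_mem_nhdsLT (show (2 / 3 : ℝ) < 1 by norm_num)] with t ⟨ht, ht₁⟩
  have hnorm : ‖t • z‖ = t := by
    rw [norm_smul, hz, mul_one, Real.norm_of_nonneg (by linarith)]
  have hdist : dist (t • z) z = 1 - t := by
    nth_rw 2 [← one_smul ℝ z]
    rw [dist_comm, dist_eq_norm, ← sub_smul, norm_smul, hz, mul_one,
      Real.norm_of_nonneg (by linarith)]
  refine ⟨mem_ball_zero_iff.2 (hnorm.trans_lt ht₁), ?_, ?_⟩
  · linarith
  · rw [hdist, hnorm]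
    nlinarith

end StolzSet

lemma tendsto_div_of_le_of_le_add {ι : Type*} {l : Filter ι} {f g h : ι → ℝ} {K L : ℝ}
    (hgf : ∀ᶠ i in l, g i ≤ f i) (hfg : ∀ᶠ i in l, f i ≤ g i + K) (hh : Tendsto h l atTop)
    (hL : Tendsto (fun i => g i / h i) l (𝓝 L)) : Tendsto (fun i => f i / h i) l (𝓝 L) := by
  have hupper : Tendsto (fun i => g i / h i + K / h i) l (𝓝 L) := by
    simpa using hL.add (hh.const_div_atTop K)
  refine tendsto_of_tendsto_of_tendsto_of_le_of_le' hL hupper ?_ ?_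
  · filter_upwards [hgf, hh.eventually_gt_atTop 0] with i hi hpos
    gcongr
  · filter_upwards [hfg, hh.eventually_gt_atTop 0] with i hi hpos
    rw [← add_div]
    gcongr

lemma div_four_le_mul_div_rpow {α c t y : ℝ} (hα : α ≤ 2) (hc : 0 ≤ c) (ht₀ : 0 ≤ t)
    (ht : t < 1) (hy : c * (1 - t) ^ (α / 2 - 1) ≤ y) :
    c / 4 ≤ (1 - t) / 2 * (y / (1 - t ^ 2) ^ (α / 2)) := by
  have ht' : 0 < 1 - t := sub_pos.2 ht
  have hpow : 0 < (1 - t) ^ (α / 2) := Real.rpow_pos_of_pos ht' _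
  have hfactor : (1 - t ^ 2) ^ (α / 2) ≤ 2 * (1 - t) ^ (α / 2) :=
    calc (1 - t ^ 2) ^ (α / 2) = (1 + t) ^ (α / 2) * (1 - t) ^ (α / 2) := by
          rw [← Real.mul_rpow (by positivity) ht'.le]
          congr 1
          ring
      _ ≤ (1 + t) ^ (1 : ℝ) * (1 - t) ^ (α / 2) := by
          gcongr <;> linarith
      _ ≤ 2 * (1 - t) ^ (α / 2) := by
          rw [Real.rpow_one]
          gcongr
          linarith
  have hpos : 0 < (1 - t ^ 2) ^ (α / 2) := Real.rpow_pos_of_pos (by nlinarith) _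
  rw [Real.rpow_sub_one ht'.ne', mul_div_assoc', div_le_iff₀ ht'] at hy
  rw [div_mul_div_comm, div_le_div_iff₀ (by norm_num) (by positivity)]
  nlinarith

section RelativeFatouForAlphaHarmonic

variable {k : ℕ} {α : ℝ} {u v : EuclideanSpace ℝ (Fin (k + 1)) → ℝ}

theorem IsAlphaHarmonic.ae_tendsto_div_cutoffPotential
    (hu : IsAlphaHarmonic (k + 1) α (ball 0 1) u) (hα : α ∈ Ioo 0 2)
    {σ : Measure (EuclideanSpace ℝ (Fin (k + 1)))} [IsFiniteMeasure σ]
    (hσ : ∀ᵐ z ∂σ, ‖z‖ = 1 ∧ IsAhlforsRegularAt σ k z) :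
    ∀ᵐ z ∂σ, ∃ L, ∀ β > 0, Tendsto (fun x => u x / (1 - ‖x‖ ^ 2) ^ (α / 2) /
      cutoffPotential (k + 1) σ x ((1 - ‖x‖) / 2)) (𝓝[stolzSet (k + 1) β z] z) (𝓝 L) := by
  obtain ⟨m, K, hm⟩ := hu.exists_finiteMeasure_cutoffPotential_bounds hα
  filter_upwards [hσ, ae_tendsto_deviationMeasure_closedBall_div (m := m)] with z ⟨hz, hreg⟩ hdev
  refine ⟨((m : Measure _).rnDeriv σ z).toReal, fun β hβ => ?_⟩
  have hβ₂ : 0 ≤ 2 * β := by positivity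
  have hheight := tendsto_height_nhdsWithin_stolzSet (β := β) hz
  have hstolz : ∀ᶠ x in 𝓝[stolzSet (k + 1) β z] z, x ∈ stolzSet (k + 1) β z :=
    self_mem_nhdsWithin
  have hcone := hstolz.mono fun x hx => dist_le_of_mem_stolzSet hx
  have hbounds := hstolz.mono fun x hx => hm x (norm_lt_one_of_mem_stolzSet hx)
  exact tendsto_div_of_le_of_le_add (hbounds.mono fun _ => And.left)
    (hbounds.mono fun _ => And.right) (hreg.tendsto_cutoffPotential_atTop hβ₂ hheight hcone)
    (tendsto_cutoffPotential_div_cutoffPotential hreg hdev hβ₂ hheight hcone)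

theorem IsAlphaHarmonic.ae_tendsto_div
    (hu : IsAlphaHarmonic (k + 1) α (ball 0 1) u) (hv : IsAlphaHarmonic (k + 1) α (ball 0 1) v)
    (hα : α ∈ Ioo 0 2) {c : ℝ} (hc : 0 < c)
    (hvbd : ∀ x ∈ ball 0 1, c * (1 - ‖x‖) ^ (α / 2 - 1) ≤ v x)
    {σ : Measure (EuclideanSpace ℝ (Fin (k + 1)))} [IsFiniteMeasure σ]
    (hσ : ∀ᵐ z ∂σ, ‖z‖ = 1 ∧ IsAhlforsRegularAt σ k z) :
    ∀ᵐ z ∂σ, ∃ L, ∀ β > 1, Tendsto (fun x => u x / v x) (𝓝[stolzSet (k + 1) β z] z) (𝓝 L) := by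
  filter_upwards [hu.ae_tendsto_div_cutoffPotential hα hσ,
    hv.ae_tendsto_div_cutoffPotential hα hσ, hσ] with z ⟨Lu, hLu⟩ ⟨Lv, hLv⟩ ⟨hz, hreg⟩
  refine ⟨Lu / Lv, fun β hβ => ?_⟩
  have hβ₀ : 0 < β := one_pos.trans hβ
  have := neBot_nhdsWithin_stolzSet hβ hz
  have hheight := tendsto_height_nhdsWithin_stolzSet (β := β) hz
  have hstolz : ∀ᶠ x in 𝓝[stolzSet (k + 1) β z] z, x ∈ stolzSet (k + 1) β z :=
    self_mem_nhdsWithin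
  have hcone := hstolz.mono fun x hx => dist_le_of_mem_stolzSet hx
  have hLv_pos : 0 < Lv := by
    refine hreg.pos_of_tendsto_div_cutoffPotential (by positivity) hheight hcone
      (show 0 < c / 4 by positivity) (hstolz.mono fun x hx => ?_) (hLv β hβ₀)
    exact div_four_le_mul_div_rpow hα.2.le hc.le (norm_nonneg x)
      (norm_lt_one_of_mem_stolzSet hx) (hvbd x hx.1)
  refine ((hLu β hβ₀).div (hLv β hβ₀) hLv_pos.ne').congr' ?_
  filter_upwards [hstolz, (hreg.tendsto_cutoffPotential_atTop (by positivity) hheight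
    hcone).eventually_gt_atTop 0] with x hx hpot
  have hweight : 0 < (1 - ‖x‖ ^ 2) ^ (α / 2) := Real.rpow_pos_of_pos
    (sub_pos.2 (pow_lt_one₀ (norm_nonneg x) (norm_lt_one_of_mem_stolzSet hx) two_ne_zero)) _
  rw [Pi.div_apply, div_div_div_cancel_right₀ hpot.ne', div_div_div_cancel_right₀ hweight.ne']

end RelativeFatouForAlphaHarmonic

theorem stmt14_general {n : ℕ} (hn : n ≠ 0) {α : ℝ} (hα : α ∈ Ioo 0 2)
    {u v : EuclideanSpace ℝ (Fin n) → ℝ}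
    (hu : IsAlphaHarmonic n α (ball 0 1) u) (hv : IsAlphaHarmonic n α (ball 0 1) v)
    {c : ℝ} (hc : 0 < c) (hvbd : ∀ x ∈ ball 0 1, c * (1 - ‖x‖) ^ (α / 2 - 1) ≤ v x) :
    ∀ᵐ z ∂(μH[(n : ℝ) - 1].restrict (sphere (0 : EuclideanSpace ℝ (Fin n)) 1)),
      ∃ L, ∀ β > 1, Tendsto (fun x => u x / v x) (𝓝[stolzSet n β z] z) (𝓝 L) := by
  obtain ⟨k, rfl⟩ := Nat.exists_eq_succ_of_ne_zero hn
  have hE : Module.finrank ℝ (EuclideanSpace ℝ (Fin (k + 1))) = k + 1 := finrank_euclideanSpace_fin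
  rw [show ((k.succ : ℕ) : ℝ) - 1 = k by push_cast; ring]
  have := isFiniteMeasure_hausdorffMeasure_restrict_sphere hE
  refine hu.ae_tendsto_div hv hα hc hvbd ?_
  filter_upwards [ae_restrict_mem isClosed_sphere.measurableSet] with z hz
  rw [mem_sphere_zero_iff_norm] at hz
  exact ⟨hz, isAhlforsRegularAt_sphere hE hz⟩

/-- let `σ` be the surface measure on the unit sphere `S ⊆ ℝⁿ`. If `v`
is positive α-harmonic in `B` with `v(x) ≥ c (1−|x|)^{α/2−1}` for some `c > 0`, then
for every positive α-harmonic `u` in `B`, for σ-a.e. `z ∈ S` and every `β > 1`, the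
limit of `u(x)/v(x)` as `x → z`, `x ∈ A^β_z`, exists. -/
theorem stmt14 (n : ℕ) (hn : 2 ≤ n) (α : ℝ) (hα : α ∈ Set.Ioo (0 : ℝ) 2)
    (v : EuclideanSpace ℝ (Fin n) → ℝ)
    (hv : IsAlphaHarmonic n α (ball (0 : EuclideanSpace ℝ (Fin n)) 1) v)
    (hvpos : ∀ x ∈ ball (0 : EuclideanSpace ℝ (Fin n)) 1, 0 < v x)
    (c : ℝ) (hc : 0 < c)
    (hvbd : ∀ x ∈ ball (0 : EuclideanSpace ℝ (Fin n)) 1,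
      c * (1 - ‖x‖) ^ (α / 2 - 1) ≤ v x) :
    ∀ u : EuclideanSpace ℝ (Fin n) → ℝ,
      IsAlphaHarmonic n α (ball (0 : EuclideanSpace ℝ (Fin n)) 1) u →
      (∀ x ∈ ball (0 : EuclideanSpace ℝ (Fin n)) 1, 0 < u x) →
      ∀ᵐ z ∂(μH[(n : ℝ) - 1].restrict (sphere (0 : EuclideanSpace ℝ (Fin n)) 1)),
        ∀ β : ℝ, 1 < β → ∃ L : ℝ,
          Tendsto (fun x => u x / v x)
            (nhdsWithin z (stolzSet n β z)) (nhds L) := by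
  intro u hu _
  exact (stmt14_general (by omega) hα hu hv hc hvbd).mono fun z ⟨L, hL⟩ β hβ => ⟨L, hL β hβ⟩
end

section
/- (Representation by nontangential boundary values in the unit ball.) Let n ≥ 2, α ∈ (0,2), let μ and ν be finite Borel measures on the unit sphere S ⊆ ℝⁿ with ν nonzero, and define u(x) := ∫_S M(x,w) μ(dw) and h(x) := ∫_S M(x,w) ν(dw) for x in the open unit ball B. Suppose sup_{x∈B} u(x)/h(x) < ∞. Then there exists a Borel function φ : S → [0,∞) such that: (i) for ν-almost every z ∈ S and every β > 1, the limit of u(x)/h(x) as x → z with x ∈ A^β_z exists and equals φ(z); and (ii) u(x) = ∫_S M(x,w) φ(w) ν(dw) for every x ∈ B. In particular μ is absolutely continuous with respect to ν with Radon–Nikodym derivative φ. -/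
open Metric Set MeasureTheory Filter

/-!
On the ball the factor `(1 - ‖x‖²) ^ (α / 2)` cancels in `u / h`, so `u / h` is a quotient of Riesz
potentials. Write `f = dμ/dν` and let `η` be the variation of `μ - f(z) ν`. At `ν`-a.e. `z` the
Besicovitch differentiation theorem gives `η (B(z, r)) = o(ν (B(z, r)))`, and, as `ν` lives on a
Lebesgue null set, `r ^ n = o(ν (B(z, r)))`, so the potential of `ν` blows up at `z`. For `x` in a
Stolz region `|x - w|` is comparable to `(1 - ‖x‖) + |w - z|`, a radial function about `z`, and the
layer-cake formula turns the estimate on balls into the same estimate for potentials; hence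
`u / h → f(z)`. Exchanging the roles of `μ` and `ν`, `h / u → dν/dμ` at `μ`-a.e. point; if `u / h`
is bounded then `dν/dμ` is bounded below, so `μ ≪ ν`.
-/

open scoped ENNReal Topology

section Deviation

variable {X : Type*} [MeasurableSpace X]

/-- The variation of the signed measure `μ - f(z) ν`, where `f = dμ/dν`: its part absolutely
continuous with respect to `ν` has density `|f - f(z)|`, and its singular part is that of `μ`.
It measures how far `μ` is from the multiple `f(z) ν` of `ν` near `z`. -/
noncomputable def rnDerivDeviation (μ ν : Measure X) (z : X) : Measure X :=
  ν.withDensity (fun w => ‖(μ.rnDeriv ν w).toReal - (μ.rnDeriv ν z).toReal‖ₑ) + μ.singularPart ν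

lemma le_add_enorm_toReal_sub {a b : ℝ≥0∞} (ha : a ≠ ∞) :
    a ≤ b + ‖a.toReal - b.toReal‖ₑ := by
  rcases eq_or_ne b ∞ with rfl | hb
  · simp
  · calc a = ENNReal.ofReal a.toReal := (ENNReal.ofReal_toReal ha).symm
      _ ≤ ENNReal.ofReal (b.toReal + |a.toReal - b.toReal|) :=
        ENNReal.ofReal_le_ofReal (by linarith [le_abs_self (a.toReal - b.toReal)])
      _ = b + ‖a.toReal - b.toReal‖ₑ := by
        rw [ENNReal.ofReal_add ENNReal.toReal_nonneg (abs_nonneg _), ENNReal.ofReal_toReal hb,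
          Real.enorm_eq_ofReal_abs]

lemma le_rnDeriv_smul_add_rnDerivDeviation (μ ν : Measure X) [SigmaFinite μ] [SigmaFinite ν]
    (z : X) : μ ≤ μ.rnDeriv ν z • ν + rnDerivDeviation μ ν z := by
  calc μ = ν.withDensity (μ.rnDeriv ν) + μ.singularPart ν :=
        (Measure.rnDeriv_add_singularPart μ ν).symm
    _ ≤ ν.withDensity ((fun _ => μ.rnDeriv ν z) +
          fun w => ‖(μ.rnDeriv ν w).toReal - (μ.rnDeriv ν z).toReal‖ₑ) + μ.singularPart ν := by
        refine add_le_add (withDensity_mono ?_) le_rfl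
        filter_upwards [Measure.rnDeriv_ne_top μ ν] with w hw using le_add_enorm_toReal_sub hw
    _ = μ.rnDeriv ν z • ν + rnDerivDeviation μ ν z := by
        rw [withDensity_add_left measurable_const, withDensity_const, add_assoc, rnDerivDeviation]

lemma rnDeriv_smul_le_add_rnDerivDeviation (μ ν : Measure X) {z : X} (hz : μ.rnDeriv ν z ≠ ∞) :
    μ.rnDeriv ν z • ν ≤ μ + rnDerivDeviation μ ν z := by
  calc μ.rnDeriv ν z • ν = ν.withDensity fun _ => μ.rnDeriv ν z := (withDensity_const _).symm
    _ ≤ ν.withDensity (μ.rnDeriv ν +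
          fun w => ‖(μ.rnDeriv ν w).toReal - (μ.rnDeriv ν z).toReal‖ₑ) := by
        refine withDensity_mono (ae_of_all _ fun w => ?_)
        rw [Pi.add_apply, enorm_sub_rev]
        exact le_add_enorm_toReal_sub hz
    _ = ν.withDensity (μ.rnDeriv ν) +
          ν.withDensity fun w => ‖(μ.rnDeriv ν w).toReal - (μ.rnDeriv ν z).toReal‖ₑ :=
        withDensity_add_left (Measure.measurable_rnDeriv μ ν) _
    _ ≤ μ + rnDerivDeviation μ ν z :=
        add_le_add (Measure.withDensity_rnDeriv_le μ ν) (Measure.le_add_right le_rfl)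

instance isFiniteMeasure_rnDerivDeviation (μ ν : Measure X) [IsFiniteMeasure μ]
    [IsFiniteMeasure ν] (z : X) : IsFiniteMeasure (rnDerivDeviation μ ν z) := by
  have hint : Integrable (fun w => (μ.rnDeriv ν w).toReal - (μ.rnDeriv ν z).toReal) ν :=
    Measure.integrable_toReal_rnDeriv.sub (integrable_const _)
  have := isFiniteMeasure_withDensity hint.hasFiniteIntegral.ne
  unfold rnDerivDeviation
  infer_instance

lemma ae_rnDerivDeviation {μ ν : Measure X} {p : X → Prop} (hμ : ∀ᵐ w ∂μ, p w)
    (hν : ∀ᵐ w ∂ν, p w) (z : X) : ∀ᵐ w ∂rnDerivDeviation μ ν z, p w :=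
  ae_add_measure_iff.2 ⟨(withDensity_absolutelyContinuous ν _).ae_le hν,
    (Measure.absolutelyContinuous_of_le (Measure.singularPart_le μ ν)).ae_le hμ⟩

end Deviation

section Differentiation

variable {X : Type*} [MetricSpace X] [SecondCountableTopology X] [HasBesicovitchCovering X]
  [MeasurableSpace X] [BorelSpace X]

lemma ae_tendsto_measure_closedBall_div_of_mutuallySingular {ρ ν : Measure X}
    [IsLocallyFiniteMeasure ρ] [IsLocallyFiniteMeasure ν] (h : ρ ⟂ₘ ν) :
    ∀ᵐ z ∂ν, Tendsto (fun r => ρ (closedBall z r) / ν (closedBall z r)) (𝓝[>] 0) (𝓝 0) := by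
  filter_upwards [Besicovitch.ae_tendsto_rnDeriv ρ ν, h.rnDeriv_ae_eq_zero] with z hz hz0
  rwa [hz0] at hz

lemma ae_tendsto_rnDerivDeviation_closedBall_div (μ ν : Measure X) [IsFiniteMeasure μ]
    [IsFiniteMeasure ν] :
    ∀ᵐ z ∂ν, Tendsto (fun r => rnDerivDeviation μ ν z (closedBall z r) / ν (closedBall z r))
      (𝓝[>] 0) (𝓝 0) := by
  have hint : Integrable (fun w => (μ.rnDeriv ν w).toReal) ν := Measure.integrable_toReal_rnDeriv
  filter_upwards [
    (Besicovitch.vitaliFamily ν).ae_tendsto_lintegral_enorm_sub_div hint.locallyIntegrable,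
    ae_tendsto_measure_closedBall_div_of_mutuallySingular
      (Measure.mutuallySingular_singularPart μ ν)] with z hlebesgue hsingular
  have hsum := (hlebesgue.comp (Besicovitch.tendsto_filterAt ν z)).add hsingular
  rw [add_zero] at hsum
  refine hsum.congr fun r => ?_
  rw [rnDerivDeviation, Measure.add_apply, withDensity_apply _ measurableSet_closedBall,
    ENNReal.add_div, Function.comp_apply]

end Differentiation

section LayerCake

lemma lintegral_ofReal_le_of_measure_superlevel_le {X : Type*} [MeasurableSpace X]
    {η ν : Measure X} {f : X → ℝ} (hf : Measurable f) (hf0 : 0 ≤ f) {ε : ℝ≥0∞} {c : ℝ}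
    (h : ∀ᵐ t : ℝ, c < t → η {w | t ≤ f w} ≤ ε * ν {w | t ≤ f w}) :
    ∫⁻ w, ENNReal.ofReal (f w) ∂η ≤
      ε * ∫⁻ w, ENNReal.ofReal (f w) ∂ν + ENNReal.ofReal c * η univ := by
  have hanti : Antitone fun t : ℝ => ν {w | t ≤ f w} :=
    fun t t' htt' => measure_mono fun w hw => htt'.trans hw
  have hlevel : ∀ᵐ t ∂volume.restrict (Ioi (0 : ℝ)),
      η {w | t ≤ f w} ≤ ε * ν {w | t ≤ f w} + (Ioc 0 c).indicator (fun _ => η univ) t := by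
    filter_upwards [ae_restrict_of_ae h, ae_restrict_mem measurableSet_Ioi] with t ht ht0
    rcases le_or_gt t c with htc | hct
    · rw [indicator_of_mem (show t ∈ Ioc 0 c from ⟨ht0, htc⟩)]
      exact (measure_mono (subset_univ _)).trans le_add_self
    · exact (ht hct).trans le_self_add
  rw [lintegral_eq_lintegral_meas_le η (ae_of_all _ hf0) hf.aemeasurable,
    lintegral_eq_lintegral_meas_le ν (ae_of_all _ hf0) hf.aemeasurable]
  calc ∫⁻ t in Ioi 0, η {w | t ≤ f w}
    _ ≤ ∫⁻ t in Ioi 0, (ε * ν {w | t ≤ f w} + (Ioc 0 c).indicator (fun _ => η univ) t) :=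
        lintegral_mono_ae hlevel
    _ = ε * (∫⁻ t in Ioi 0, ν {w | t ≤ f w}) +
          ∫⁻ t in Ioi 0, (Ioc 0 c).indicator (fun _ => η univ) t := by
        rw [lintegral_add_left (hanti.measurable.const_mul ε),
          lintegral_const_mul _ hanti.measurable]
    _ ≤ ε * (∫⁻ t in Ioi 0, ν {w | t ≤ f w}) + ENNReal.ofReal c * η univ := by
        gcongr
        refine (setLIntegral_le_lintegral _ _).trans_eq ?_
        rw [lintegral_indicator_const measurableSet_Ioc, Real.volume_Ioc, sub_zero, mul_comm]

lemma setOf_le_add_dist_rpow_neg {X : Type*} [PseudoMetricSpace X] {s δ t : ℝ} (hs : 0 < s)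
    (hδ : 0 < δ) (ht : 0 < t) (z : X) :
    {w | t ≤ (δ + dist w z) ^ (-s)} = closedBall z (t ^ (-s)⁻¹ - δ) := by
  ext w
  have hpos : 0 < δ + dist w z := by positivity
  rw [mem_ofPred_eq, mem_closedBall, le_sub_iff_add_le',
    Real.le_rpow_inv_iff_of_neg hpos ht (neg_lt_zero.2 hs)]

variable {X : Type*} [PseudoMetricSpace X] [MeasurableSpace X] [BorelSpace X]

/-- The potential of `ν` at `z` for the kernel `(δ + dist w z) ^ (-s)`. Its superlevel sets are
balls about `z`, which makes it accessible to the layer-cake formula. -/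
noncomputable def regularizedPotential (s δ : ℝ) (ν : Measure X) (z : X) : ℝ≥0∞ :=
  ∫⁻ w, ENNReal.ofReal ((δ + dist w z) ^ (-s)) ∂ν

lemma regularizedPotential_le_of_measure_closedBall_le {η ν : Measure X} {z : X} {ε : ℝ≥0∞}
    {s δ r₀ : ℝ} (hs : 0 < s) (hδ : 0 < δ) (hr₀ : 0 < r₀)
    (h : ∀ r ∈ Ioo 0 r₀, η (closedBall z r) ≤ ε * ν (closedBall z r)) :
    regularizedPotential s δ η z ≤
      ε * regularizedPotential s δ ν z + ENNReal.ofReal (r₀ ^ (-s)) * η univ := by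
  refine lintegral_ofReal_le_of_measure_superlevel_le
    (by fun_prop) (fun w => by positivity) ?_
  -- `t = δ ^ (-s)` gives the ball of radius `0`, about which the hypothesis says nothing.
  filter_upwards [Measure.ae_ne volume (δ ^ (-s))] with t hne ht
  have ht0 : 0 < t := (Real.rpow_pos_of_pos hr₀ _).trans ht
  have hsn : -s < 0 := neg_lt_zero.2 hs
  rw [setOf_le_add_dist_rpow_neg hs hδ ht0]
  have hlt : t ^ (-s)⁻¹ < r₀ := (Real.rpow_inv_lt_iff_of_neg ht0 hr₀ hsn).2 ht
  have hradius : t ^ (-s)⁻¹ ≠ δ := by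
    rintro rfl
    exact hne (Real.rpow_inv_rpow ht0.le hsn.ne).symm
  rcases hradius.lt_or_gt with hneg | hpos
  · rw [closedBall_eq_empty.2 (sub_neg.2 hneg)]
    simp
  · exact h _ ⟨sub_pos.2 hpos, by linarith⟩

end LayerCake

lemma rpow_neg_le_rpow_mul_rpow_neg {a b C s : ℝ} (ha : 0 < a) (hb : 0 ≤ b) (hC : 0 < C)
    (hs : 0 ≤ s) (h : a ≤ C * b) : b ^ (-s) ≤ C ^ s * a ^ (-s) := by
  calc b ^ (-s) = C ^ s * (C * b) ^ (-s) := by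
        rw [Real.mul_rpow hC.le hb, Real.rpow_neg hC.le, mul_inv_cancel_left₀ (by positivity)]
    _ ≤ C ^ s * a ^ (-s) := by
        gcongr C ^ s * ?_
        exact Real.rpow_le_rpow_of_nonpos ha h (neg_nonpos.2 hs)

section StolzRegion

variable {E : Type*} [NormedAddCommGroup E]

/-- The nontangential approach region at a point `z` of the unit sphere. For `0 < β` it lies in the
open unit ball; the restriction `1 - ‖y‖ < 1 / 3` of `stolzSet` does not affect limits at `z`. -/
def stolzRegion (β : ℝ) (z : E) : Set E :=
  {y | dist y z < β * (1 - ‖y‖)}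

lemma stolzSet_subset_stolzRegion (n : ℕ) (β : ℝ) (z : EuclideanSpace ℝ (Fin n)) :
    stolzSet n β z ⊆ stolzRegion β z :=
  fun _ hy => hy.2.2

lemma norm_lt_one_of_mem_stolzRegion {β : ℝ} {x z : E} (hβ : 0 < β) (hx : x ∈ stolzRegion β z) :
    ‖x‖ < 1 :=
  sub_pos.1 (pos_of_mul_pos_right (dist_nonneg.trans_lt hx) hβ.le)

lemma one_sub_norm_le_dist {x w : E} (hw : ‖w‖ = 1) : 1 - ‖x‖ ≤ dist x w := by
  rw [← hw, dist_comm, dist_eq_norm]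
  exact norm_sub_norm_le w x

lemma one_sub_norm_add_dist_le {β : ℝ} {x z w : E} (hβ : 0 < β) (hx : x ∈ stolzRegion β z)
    (hw : ‖w‖ = 1) : 1 - ‖x‖ + dist w z ≤ (2 + β) * dist x w := by
  have hdepth : 1 - ‖x‖ ≤ dist x w := one_sub_norm_le_dist hw
  have hxz : dist x z < β * (1 - ‖x‖) := hx
  have htri : dist w z ≤ dist x w + dist x z := dist_triangle_left w z x
  nlinarith

lemma dist_le_mul_one_sub_norm_add_dist {β : ℝ} {x z : E} (hβ : 0 < β)
    (hx : x ∈ stolzRegion β z) (w : E) : dist x w ≤ (2 + β) * (1 - ‖x‖ + dist w z) := by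
  have hdepth : ‖x‖ < 1 := norm_lt_one_of_mem_stolzRegion hβ hx
  have hxz : dist x z < β * (1 - ‖x‖) := hx
  have htri : dist x w ≤ dist x z + dist w z := dist_triangle_right x w z
  have hwz : 0 ≤ dist w z := dist_nonneg
  nlinarith

lemma tendsto_one_sub_norm_stolzRegion {β : ℝ} {z : E} (hβ : 0 < β) (hz : ‖z‖ = 1) :
    Tendsto (fun x => 1 - ‖x‖) (𝓝[stolzRegion β z] z) (𝓝[>] 0) := by
  refine tendsto_nhdsWithin_iff.2 ⟨?_, ?_⟩
  · have hcont : Continuous fun x : E => 1 - ‖x‖ := by fun_prop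
    simpa only [hz, sub_self] using (hcont.tendsto z).mono_left nhdsWithin_le_nhds
  · filter_upwards [self_mem_nhdsWithin] with x hx
    exact sub_pos.2 (norm_lt_one_of_mem_stolzRegion hβ hx)

lemma nhdsWithin_stolzRegion_neBot [NormedSpace ℝ E] {β : ℝ} {z : E} (hβ : 1 < β)
    (hz : ‖z‖ = 1) : (𝓝[stolzRegion β z] z).NeBot := by
  have hradial : Tendsto (fun t : ℝ => (1 - t) • z) (𝓝[>] 0) (𝓝[stolzRegion β z] z) := by
    refine tendsto_nhdsWithin_iff.2 ⟨?_, ?_⟩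
    · have hcont : Continuous fun t : ℝ => (1 - t) • z := by fun_prop
      simpa only [sub_zero, one_smul] using (hcont.tendsto 0).mono_left nhdsWithin_le_nhds
    · filter_upwards [Ioo_mem_nhdsGT one_pos] with t ⟨ht0, ht1⟩
      have hnorm : ‖(1 - t) • z‖ = 1 - t := by
        rw [norm_smul, hz, mul_one, Real.norm_of_nonneg (by linarith)]
      have hdist : dist ((1 - t) • z) z = t := by
        rw [dist_eq_norm, show (1 - t) • z - z = (-t) • z by module, norm_smul, hz, mul_one,
          norm_neg, Real.norm_of_nonneg ht0.le]
      rw [stolzRegion, mem_ofPred_eq, hnorm, hdist]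
      nlinarith
  exact hradial.neBot

end StolzRegion

section RieszPotential

variable {E : Type*} [NormedAddCommGroup E] [MeasurableSpace E]

/-- The Riesz potential of order `s` of a measure. The kernel takes the junk value
`0 ^ (-s) = 0` on the diagonal, which is immaterial for `x` off the support of `ν`. -/
noncomputable def rieszPotential (s : ℝ) (ν : Measure E) (x : E) : ℝ≥0∞ :=
  ∫⁻ w, ENNReal.ofReal (dist x w ^ (-s)) ∂ν

lemma rieszPotential_le_mul_regularizedPotential {s β : ℝ} {x z : E} {η : Measure E} (hs : 0 ≤ s)
    (hη : ∀ᵐ w ∂η, ‖w‖ = 1) (hβ : 0 < β) (hx : x ∈ stolzRegion β z) :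
    rieszPotential s η x ≤
      ENNReal.ofReal ((2 + β) ^ s) * regularizedPotential s (1 - ‖x‖) η z := by
  have hdepth : 0 < 1 - ‖x‖ := sub_pos.2 (norm_lt_one_of_mem_stolzRegion hβ hx)
  rw [regularizedPotential, ← lintegral_const_mul' _ _ ENNReal.ofReal_ne_top]
  refine lintegral_mono_ae ?_
  filter_upwards [hη] with w hw
  rw [← ENNReal.ofReal_mul (by positivity)]
  exact ENNReal.ofReal_le_ofReal (rpow_neg_le_rpow_mul_rpow_neg (by positivity) dist_nonneg
    (by positivity) hs (one_sub_norm_add_dist_le hβ hx hw))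

lemma regularizedPotential_le_mul_rieszPotential {s β : ℝ} {x z : E} {ν : Measure E} (hs : 0 ≤ s)
    (hν : ∀ᵐ w ∂ν, ‖w‖ = 1) (hβ : 0 < β) (hx : x ∈ stolzRegion β z) :
    regularizedPotential s (1 - ‖x‖) ν z ≤
      ENNReal.ofReal ((2 + β) ^ s) * rieszPotential s ν x := by
  have hdepth : 0 < 1 - ‖x‖ := sub_pos.2 (norm_lt_one_of_mem_stolzRegion hβ hx)
  rw [rieszPotential, ← lintegral_const_mul' _ _ ENNReal.ofReal_ne_top]
  refine lintegral_mono_ae ?_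
  filter_upwards [hν] with w hw
  rw [← ENNReal.ofReal_mul (by positivity)]
  exact ENNReal.ofReal_le_ofReal (rpow_neg_le_rpow_mul_rpow_neg
    (hdepth.trans_le (one_sub_norm_le_dist hw)) (by positivity) (by positivity) hs
    (dist_le_mul_one_sub_norm_add_dist hβ hx w))

lemma rieszPotential_ne_top {s : ℝ} {ν : Measure E} [IsFiniteMeasure ν] {x : E} (hs : 0 ≤ s)
    (hν : ∀ᵐ w ∂ν, ‖w‖ = 1) (hx : ‖x‖ < 1) : rieszPotential s ν x ≠ ∞ := by
  have hle : rieszPotential s ν x ≤ ∫⁻ _, ENNReal.ofReal ((1 - ‖x‖) ^ (-s)) ∂ν := by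
    refine lintegral_mono_ae ?_
    filter_upwards [hν] with w hw
    exact ENNReal.ofReal_le_ofReal (Real.rpow_le_rpow_of_nonpos (sub_pos.2 hx)
      (one_sub_norm_le_dist hw) (neg_nonpos.2 hs))
  rw [lintegral_const] at hle
  exact ne_top_of_le_ne_top (ENNReal.mul_ne_top ENNReal.ofReal_ne_top (measure_ne_top ν _)) hle

variable [BorelSpace E]

lemma rieszPotential_ne_zero {s : ℝ} {ν : Measure E} {x : E} (hν0 : ν ≠ 0)
    (hν : ∀ᵐ w ∂ν, ‖w‖ = 1) (hx : ‖x‖ < 1) : rieszPotential s ν x ≠ 0 := by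
  intro hzero
  rw [rieszPotential, lintegral_eq_zero_iff (by fun_prop)] at hzero
  refine hν0 (ae_eq_bot.1 (eventually_false_iff_eq_bot.1 ?_))
  filter_upwards [hzero, hν] with w hw0 hw
  have hdist : 0 < dist x w := (sub_pos.2 hx).trans_le (one_sub_norm_le_dist hw)
  exact (ENNReal.ofReal_pos.2 (Real.rpow_pos_of_pos hdist (-s))).ne' hw0

lemma integral_const_mul_dist_rpow_neg (c s : ℝ) (ν : Measure E) (x : E) :
    ∫ w, c * dist x w ^ (-s) ∂ν = c * (rieszPotential s ν x).toReal := by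
  have hmeas : Measurable fun w => dist x w ^ (-s) := by fun_prop
  rw [integral_const_mul, integral_eq_lintegral_of_nonneg_ae (ae_of_all _ fun w => by positivity)
    hmeas.aestronglyMeasurable, rieszPotential]

lemma integral_const_mul_dist_rpow_neg_div {c : ℝ} (hc : c ≠ 0) (s : ℝ) (μ ν : Measure E) (x : E) :
    (∫ w, c * dist x w ^ (-s) ∂μ) / (∫ w, c * dist x w ^ (-s) ∂ν) =
      (rieszPotential s μ x / rieszPotential s ν x).toReal := by
  rw [integral_const_mul_dist_rpow_neg, integral_const_mul_dist_rpow_neg,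
    mul_div_mul_left _ _ hc, ENNReal.toReal_div]

lemma mul_inv_rpow_div_measure_closedBall_le_rieszPotential {s β : ℝ} {x z : E} {ν : Measure E}
    (hs : 0 ≤ s) (hν : ∀ᵐ w ∂ν, ‖w‖ = 1) (hβ : 0 < β) (hx : x ∈ stolzRegion β z) :
    ENNReal.ofReal ((1 + β) ^ (-s)) *
        (ENNReal.ofReal ((1 - ‖x‖) ^ s) / ν (closedBall z (1 - ‖x‖)))⁻¹ ≤
      rieszPotential s ν x := by
  have hdepth : 0 < 1 - ‖x‖ := sub_pos.2 (norm_lt_one_of_mem_stolzRegion hβ hx)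
  have hxz : dist x z < β * (1 - ‖x‖) := hx
  have hdepth_rpow : 0 < (1 - ‖x‖) ^ s := Real.rpow_pos_of_pos hdepth s
  calc ENNReal.ofReal ((1 + β) ^ (-s)) *
        (ENNReal.ofReal ((1 - ‖x‖) ^ s) / ν (closedBall z (1 - ‖x‖)))⁻¹
    _ = ENNReal.ofReal (((1 + β) * (1 - ‖x‖)) ^ (-s)) * ν (closedBall z (1 - ‖x‖)) := by
        rw [ENNReal.inv_div (Or.inr ENNReal.ofReal_ne_top)
          (Or.inr (ENNReal.ofReal_pos.2 hdepth_rpow).ne'), Real.mul_rpow (by positivity) hdepth.le,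
          ENNReal.ofReal_mul (by positivity), Real.rpow_neg hdepth.le,
          ENNReal.ofReal_inv_of_pos hdepth_rpow, ENNReal.div_eq_inv_mul, mul_assoc]
    _ = ∫⁻ _ in closedBall z (1 - ‖x‖), ENNReal.ofReal (((1 + β) * (1 - ‖x‖)) ^ (-s)) ∂ν :=
        (setLIntegral_const _ _).symm
    _ ≤ ∫⁻ w in closedBall z (1 - ‖x‖), ENNReal.ofReal (dist x w ^ (-s)) ∂ν := by
        refine lintegral_mono_ae ?_
        filter_upwards [ae_restrict_of_ae hν, ae_restrict_mem measurableSet_closedBall]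
          with w hw hwz
        have htri : dist x w ≤ dist x z + dist w z := dist_triangle_right x w z
        rw [mem_closedBall] at hwz
        exact ENNReal.ofReal_le_ofReal (Real.rpow_le_rpow_of_nonpos
          (hdepth.trans_le (one_sub_norm_le_dist hw)) (by linarith) (neg_nonpos.2 hs))
    _ ≤ rieszPotential s ν x := setLIntegral_le_lintegral _ _

lemma tendsto_rieszPotential_top {s β : ℝ} {z : E} {ν : Measure E} (hs : 0 ≤ s)
    (hν : ∀ᵐ w ∂ν, ‖w‖ = 1) (hβ : 0 < β) (hz : ‖z‖ = 1)
    (hgrowth : Tendsto (fun r => ENNReal.ofReal (r ^ s) / ν (closedBall z r)) (𝓝[>] 0) (𝓝 0)) :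
    Tendsto (rieszPotential s ν) (𝓝[stolzRegion β z] z) (𝓝 ∞) := by
  have hconst : ENNReal.ofReal ((1 + β) ^ (-s)) ≠ 0 :=
    (ENNReal.ofReal_pos.2 (by positivity)).ne'
  have hlower := ENNReal.Tendsto.const_mul (a := ENNReal.ofReal ((1 + β) ^ (-s)))
    (tendsto_inv_iff.2 (hgrowth.comp (tendsto_one_sub_norm_stolzRegion hβ hz)))
    (Or.inl (by simp))
  rw [ENNReal.inv_zero, ENNReal.mul_top hconst] at hlower
  refine tendsto_nhds_top_mono hlower ?_
  filter_upwards [self_mem_nhdsWithin] with x hx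
  exact mul_inv_rpow_div_measure_closedBall_le_rieszPotential hs hν hβ hx

lemma rieszPotential_le_of_measure_closedBall_le {s β r₀ : ℝ} {x z : E} {η ν : Measure E}
    {ε : ℝ≥0∞} (hs : 0 < s) (hη : ∀ᵐ w ∂η, ‖w‖ = 1) (hν : ∀ᵐ w ∂ν, ‖w‖ = 1) (hβ : 0 < β)
    (hx : x ∈ stolzRegion β z) (hr₀ : 0 < r₀)
    (h : ∀ r ∈ Ioo 0 r₀, η (closedBall z r) ≤ ε * ν (closedBall z r)) :
    rieszPotential s η x ≤
      ENNReal.ofReal ((2 + β) ^ s) * (ε * (ENNReal.ofReal ((2 + β) ^ s) * rieszPotential s ν x) +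
        ENNReal.ofReal (r₀ ^ (-s)) * η univ) := by
  refine (rieszPotential_le_mul_regularizedPotential hs.le hη hβ hx).trans ?_
  gcongr
  refine (regularizedPotential_le_of_measure_closedBall_le hs
    (sub_pos.2 (norm_lt_one_of_mem_stolzRegion hβ hx)) hr₀ h).trans ?_
  gcongr
  exact regularizedPotential_le_mul_rieszPotential hs.le hν hβ hx

end RieszPotential

section PotentialRatio

lemma tendsto_div_of_le_add_of_le_add {ι : Type*} {l : Filter ι} {u h e : ι → ℝ≥0∞} {c : ℝ≥0∞}
    (hc : c ≠ ∞) (hupper : ∀ i, u i ≤ c * h i + e i) (hlower : ∀ i, c * h i ≤ u i + e i)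
    (hh0 : ∀ᶠ i in l, h i ≠ 0) (hh : ∀ᶠ i in l, h i ≠ ∞)
    (he : Tendsto (fun i => e i / h i) l (𝓝 0)) :
    Tendsto (fun i => u i / h i) l (𝓝 c) := by
  have hsub : Tendsto (fun i => c - e i / h i) l (𝓝 c) := by
    simpa only [tsub_zero] using ENNReal.Tendsto.sub tendsto_const_nhds he (Or.inl hc)
  have hadd : Tendsto (fun i => c + e i / h i) l (𝓝 c) := by
    simpa only [add_zero] using tendsto_const_nhds.add he
  refine tendsto_of_tendsto_of_tendsto_of_le_of_le' hsub hadd ?_ ?_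
  · filter_upwards [hh0, hh] with i hi0 hi
    rw [tsub_le_iff_right, ← ENNReal.add_div,
      ENNReal.le_div_iff_mul_le (Or.inl hi0) (Or.inl hi)]
    exact hlower i
  · filter_upwards [hh0, hh] with i hi0 hi
    rw [ENNReal.div_le_iff hi0 hi, add_mul, ENNReal.div_mul_cancel hi0 hi]
    exact hupper i

lemma exists_forall_measure_closedBall_le_mul {X : Type*} [PseudoMetricSpace X]
    [MeasurableSpace X] {η ν : Measure X} {z : X} {ε : ℝ≥0∞}
    (h : Tendsto (fun r => η (closedBall z r) / ν (closedBall z r)) (𝓝[>] 0) (𝓝 0))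
    (hε : ε ≠ 0) (hεtop : ε ≠ ∞) :
    ∃ r₀ > 0, ∀ r ∈ Ioo 0 r₀, η (closedBall z r) ≤ ε * ν (closedBall z r) := by
  refine mem_nhdsGT_iff_exists_Ioo_subset.1 ?_
  filter_upwards [h.eventually_lt_const (pos_iff_ne_zero.2 hε)] with r hr
  exact (ENNReal.div_le_iff_le_mul (Or.inr hεtop) (Or.inr hε)).1 hr.le

variable {E : Type*} [NormedAddCommGroup E] [MeasurableSpace E] [BorelSpace E]

lemma tendsto_rieszPotential_div_zero {s β : ℝ} {z : E} {η ν : Measure E} [IsFiniteMeasure η]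
    (hs : 0 < s) (hη : ∀ᵐ w ∂η, ‖w‖ = 1) (hν : ∀ᵐ w ∂ν, ‖w‖ = 1) (hβ : 0 < β)
    (hballs : Tendsto (fun r => η (closedBall z r) / ν (closedBall z r)) (𝓝[>] 0) (𝓝 0))
    (htop : Tendsto (rieszPotential s ν) (𝓝[stolzRegion β z] z) (𝓝 ∞)) :
    Tendsto (fun x => rieszPotential s η x / rieszPotential s ν x)
      (𝓝[stolzRegion β z] z) (𝓝 0) := by
  set K : ℝ≥0∞ := ENNReal.ofReal ((2 + β) ^ s) with hK
  have hKtop : K ≠ ∞ := ENNReal.ofReal_ne_top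
  refine ENNReal.tendsto_nhds_zero.2 fun e he => ?_
  obtain ⟨ε, hε, hεtop, hεe⟩ : ∃ ε : ℝ≥0∞, 0 < ε ∧ ε ≠ ∞ ∧ K * (ε * K) < e := by
    have hcont : Continuous fun ε : ℝ≥0∞ => K * (ε * K) :=
      (ENNReal.continuous_const_mul hKtop).comp (ENNReal.continuous_mul_const hKtop)
    have hlim : Tendsto (fun ε => K * (ε * K)) (𝓝[>] 0) (𝓝 0) := by
      simpa only [zero_mul, mul_zero] using (hcont.tendsto 0).mono_left nhdsWithin_le_nhds
    have hfinite : ∀ᶠ ε : ℝ≥0∞ in 𝓝[>] 0, ε ≠ ∞ :=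
      (eventually_ne_nhds ENNReal.zero_ne_top).filter_mono nhdsWithin_le_nhds
    exact (eventually_mem_nhdsWithin.and (hfinite.and (hlim.eventually_lt_const he))).exists
  obtain ⟨r₀, hr₀, hr⟩ := exists_forall_measure_closedBall_le_mul hballs hε.ne' hεtop
  set C : ℝ≥0∞ := K * (ENNReal.ofReal (r₀ ^ (-s)) * η univ) with hC
  have hCtop : C ≠ ∞ := ENNReal.mul_ne_top hKtop
    (ENNReal.mul_ne_top ENNReal.ofReal_ne_top (measure_ne_top η _))
  have hbound : Tendsto (fun x => K * (ε * K) + C / rieszPotential s ν x)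
      (𝓝[stolzRegion β z] z) (𝓝 (K * (ε * K))) := by
    simpa only [ENNReal.div_top, add_zero] using
      tendsto_const_nhds.add (ENNReal.Tendsto.const_div htop (Or.inr hCtop))
  filter_upwards [hbound.eventually_lt_const hεe, self_mem_nhdsWithin] with x hxe hx
  calc rieszPotential s η x / rieszPotential s ν x
    _ ≤ (K * (ε * K) * rieszPotential s ν x + C) / rieszPotential s ν x := by
        gcongr
        refine (rieszPotential_le_of_measure_closedBall_le hs hη hν hβ hx hr₀ hr).trans_eq ?_
        rw [← hK, hC]
        ring
    _ ≤ K * (ε * K) + C / rieszPotential s ν x := by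
        rw [ENNReal.add_div]
        gcongr
        exact ENNReal.div_le_of_le_mul le_rfl
    _ ≤ e := hxe.le

lemma tendsto_rieszPotential_div_rnDeriv {s β : ℝ} {z : E} {μ ν : Measure E} [IsFiniteMeasure μ]
    [IsFiniteMeasure ν] (hs : 0 < s) (hμ : ∀ᵐ w ∂μ, ‖w‖ = 1) (hν : ∀ᵐ w ∂ν, ‖w‖ = 1)
    (hβ : 0 < β) (hz : ‖z‖ = 1) (hderiv : μ.rnDeriv ν z ≠ ∞)
    (hgrowth : Tendsto (fun r => ENNReal.ofReal (r ^ s) / ν (closedBall z r)) (𝓝[>] 0) (𝓝 0))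
    (hdev : Tendsto (fun r => rnDerivDeviation μ ν z (closedBall z r) / ν (closedBall z r))
      (𝓝[>] 0) (𝓝 0)) :
    Tendsto (fun x => rieszPotential s μ x / rieszPotential s ν x)
      (𝓝[stolzRegion β z] z) (𝓝 (μ.rnDeriv ν z)) := by
  have htop := tendsto_rieszPotential_top hs.le hν hβ hz hgrowth
  refine tendsto_div_of_le_add_of_le_add (e := rieszPotential s (rnDerivDeviation μ ν z)) hderiv
    (fun x => ?_) (fun x => ?_) (htop.eventually_ne ENNReal.top_ne_zero) ?_
    (tendsto_rieszPotential_div_zero hs (ae_rnDerivDeviation hμ hν z) hν hβ hdev htop)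
  · have hle := lintegral_mono' (le_rnDeriv_smul_add_rnDerivDeviation μ ν z)
      (le_refl fun w => ENNReal.ofReal (dist x w ^ (-s)))
    rwa [lintegral_add_measure, lintegral_smul_measure] at hle
  · have hle := lintegral_mono' (rnDeriv_smul_le_add_rnDerivDeviation μ ν hderiv)
      (le_refl fun w => ENNReal.ofReal (dist x w ^ (-s)))
    rwa [lintegral_add_measure, lintegral_smul_measure] at hle
  · filter_upwards [self_mem_nhdsWithin] with x hx
    exact rieszPotential_ne_top hs.le hν (norm_lt_one_of_mem_stolzRegion hβ hx)

end PotentialRatio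

section Fatou

variable {E : Type*} [NormedAddCommGroup E] [NormedSpace ℝ E] [FiniteDimensional ℝ E]
  [MeasurableSpace E] [BorelSpace E]

lemma addHaar_mutuallySingular_of_ae_norm_eq_one {ν : Measure E} (hν : ∀ᵐ w ∂ν, ‖w‖ = 1) :
    (Measure.addHaar : Measure E) ⟂ₘ ν := by
  refine ⟨sphere 0 1, isClosed_sphere.measurableSet,
    Measure.addHaar_sphere_of_ne_zero _ _ one_ne_zero, ?_⟩
  simpa only [ae_iff, compl_def, mem_sphere_zero_iff_norm] using hν

lemma ae_tendsto_rpow_div_measure_closedBall {s : ℝ} (hs : Module.finrank ℝ E ≤ s) {ν : Measure E}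
    [IsLocallyFiniteMeasure ν] (hν : (Measure.addHaar : Measure E) ⟂ₘ ν) :
    ∀ᵐ z ∂ν, Tendsto (fun r => ENNReal.ofReal (r ^ s) / ν (closedBall z r)) (𝓝[>] 0) (𝓝 0) := by
  set V : ℝ≥0∞ := Measure.addHaar (ball (0 : E) 1) with hV
  have hV0 : V ≠ 0 := (measure_ball_pos _ _ one_pos).ne'
  have hVtop : V ≠ ∞ := measure_ball_lt_top.ne
  filter_upwards [ae_tendsto_measure_closedBall_div_of_mutuallySingular hν] with z hz
  have hscaled : Tendsto (fun r => V⁻¹ * (Measure.addHaar (closedBall z r) / ν (closedBall z r)))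
      (𝓝[>] 0) (𝓝 0) := by
    simpa only [mul_zero] using
      ENNReal.Tendsto.const_mul hz (Or.inr (ENNReal.inv_ne_top.2 hV0))
  refine tendsto_of_tendsto_of_tendsto_of_le_of_le' tendsto_const_nhds hscaled
    (Eventually.of_forall fun _ => zero_le) ?_
  filter_upwards [Ioo_mem_nhdsGT one_pos] with r ⟨hr0, hr1⟩
  have hpow : r ^ s ≤ r ^ Module.finrank ℝ E := by
    rw [← Real.rpow_natCast]
    exact Real.rpow_le_rpow_of_exponent_ge hr0 hr1.le hs
  rw [Measure.addHaar_closedBall Measure.addHaar _ hr0.le, ← hV, mul_comm _ V,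
    mul_div_assoc, ← mul_assoc, ENNReal.inv_mul_cancel hV0 hVtop, one_mul]
  gcongr

theorem ae_tendsto_rieszPotential_div {s : ℝ} (hs : Module.finrank ℝ E ≤ s) {μ ν : Measure E}
    [IsFiniteMeasure μ] [IsFiniteMeasure ν] (hμ : ∀ᵐ w ∂μ, ‖w‖ = 1) (hν : ∀ᵐ w ∂ν, ‖w‖ = 1) :
    ∀ᵐ z ∂ν, ∀ β : ℝ, 0 < β →
      Tendsto (fun x => rieszPotential s μ x / rieszPotential s ν x)
        (𝓝[stolzRegion β z] z) (𝓝 (μ.rnDeriv ν z)) := by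
  filter_upwards [hν, Measure.rnDeriv_ne_top μ ν, ae_tendsto_rnDerivDeviation_closedBall_div μ ν,
    ae_tendsto_rpow_div_measure_closedBall hs (addHaar_mutuallySingular_of_ae_norm_eq_one hν)]
    with z hz hderiv hdev hgrowth β hβ
  have hdim : 0 < Module.finrank ℝ E :=
    Module.finrank_pos_iff_exists_ne_zero.2 ⟨z, norm_ne_zero_iff.1 (hz ▸ one_ne_zero)⟩
  have hs0 : 0 < s := (Nat.cast_pos.2 hdim).trans_le hs
  exact tendsto_rieszPotential_div_rnDeriv hs0 hμ hν hβ hz hderiv hgrowth hdev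

theorem absolutelyContinuous_of_rieszPotential_div_le {s : ℝ} (hs : Module.finrank ℝ E ≤ s)
    {μ ν : Measure E} [IsFiniteMeasure μ] [IsFiniteMeasure ν] (hν0 : ν ≠ 0)
    (hμ : ∀ᵐ w ∂μ, ‖w‖ = 1) (hν : ∀ᵐ w ∂ν, ‖w‖ = 1) {C : ℝ≥0∞} (hC : C ≠ ∞)
    (hbdd : ∀ x ∈ ball (0 : E) 1, rieszPotential s μ x / rieszPotential s ν x ≤ C) : μ ≪ ν := by
  have hs0 : 0 ≤ s := (Nat.cast_nonneg _).trans hs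
  have hpos : ∀ᵐ z ∂μ, ν.rnDeriv μ z ≠ 0 := by
    filter_upwards [hμ, ae_tendsto_rieszPotential_div hs hν hμ] with z hz hlim
    have := nhdsWithin_stolzRegion_neBot one_lt_two hz
    have hge : C⁻¹ ≤ ν.rnDeriv μ z := by
      refine ge_of_tendsto (hlim 2 two_pos) ?_
      filter_upwards [self_mem_nhdsWithin] with x hx
      have hx1 : ‖x‖ < 1 := norm_lt_one_of_mem_stolzRegion two_pos hx
      rw [← ENNReal.inv_div (Or.inl (rieszPotential_ne_top hs0 hν hx1))
        (Or.inl (rieszPotential_ne_zero hν0 hν hx1))]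
      exact ENNReal.inv_le_inv.2 (hbdd x (mem_ball_zero_iff.2 hx1))
    exact ((ENNReal.inv_pos.2 hC).trans_le hge).ne'
  exact (withDensity_absolutelyContinuous' (Measure.measurable_rnDeriv ν μ).aemeasurable hpos).trans
    (Measure.absolutelyContinuous_of_le (Measure.withDensity_rnDeriv_le ν μ))

end Fatou

lemma one_sub_norm_sq_rpow_ne_zero {E : Type*} [SeminormedAddCommGroup E] (a : ℝ) :
    ∀ x ∈ ball (0 : E) 1, (1 - ‖x‖ ^ 2) ^ a ≠ 0 := by
  intro x hx
  have hx1 : ‖x‖ < 1 := mem_ball_zero_iff.1 hx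
  exact (Real.rpow_pos_of_pos (by nlinarith [norm_nonneg x]) a).ne'

theorem stmt15_general {E : Type*} [NormedAddCommGroup E] [NormedSpace ℝ E]
    [FiniteDimensional ℝ E] [MeasurableSpace E] [BorelSpace E] {s : ℝ}
    (hs : Module.finrank ℝ E ≤ s) {m : E → ℝ} (hm : ∀ x ∈ ball (0 : E) 1, m x ≠ 0)
    (μ ν : Measure E) [IsFiniteMeasure μ] [IsFiniteMeasure ν] (hν : ν ≠ 0)
    (hμS : μ (sphere (0 : E) 1)ᶜ = 0) (hνS : ν (sphere (0 : E) 1)ᶜ = 0)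
    (hbdd : ∃ C : ℝ, ∀ x ∈ ball (0 : E) 1,
      (∫ w, m x * dist x w ^ (-s) ∂μ) / (∫ w, m x * dist x w ^ (-s) ∂ν) ≤ C) :
    ∃ φ : E → ℝ, Measurable φ ∧ (∀ w, 0 ≤ φ w) ∧
      (∀ᵐ z ∂ν, ∀ β : ℝ, 1 < β →
        Tendsto (fun x =>
            (∫ w, m x * dist x w ^ (-s) ∂μ) / (∫ w, m x * dist x w ^ (-s) ∂ν))
          (𝓝[stolzRegion β z] z) (𝓝 (φ z))) ∧
      (∀ x ∈ ball (0 : E) 1,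
        (∫ w, m x * dist x w ^ (-s) ∂μ) = ∫ w, m x * dist x w ^ (-s) * φ w ∂ν) ∧
      μ = ν.withDensity (fun w => ENNReal.ofReal (φ w)) := by
  have hμ1 : ∀ᵐ w ∂μ, ‖w‖ = 1 := by
    filter_upwards [mem_ae_iff.2 hμS] with w hw using mem_sphere_zero_iff_norm.1 hw
  have hν1 : ∀ᵐ w ∂ν, ‖w‖ = 1 := by
    filter_upwards [mem_ae_iff.2 hνS] with w hw using mem_sphere_zero_iff_norm.1 hw
  have hs0 : 0 ≤ s := (Nat.cast_nonneg _).trans hs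
  have hac : μ ≪ ν := by
    obtain ⟨C, hC⟩ := hbdd
    refine absolutelyContinuous_of_rieszPotential_div_le hs hν hμ1 hν1
      (ENNReal.ofReal_ne_top (r := C)) fun x hx => ?_
    have hx1 : ‖x‖ < 1 := mem_ball_zero_iff.1 hx
    have hratio := hC x hx
    rw [integral_const_mul_dist_rpow_neg_div (hm x hx)] at hratio
    exact (ENNReal.le_ofReal_iff_toReal_le (ENNReal.div_ne_top (rieszPotential_ne_top hs0 hμ1 hx1)
      (rieszPotential_ne_zero hν hν1 hx1)) (ENNReal.toReal_nonneg.trans hratio)).2 hratio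
  refine ⟨fun w => (μ.rnDeriv ν w).toReal, (Measure.measurable_rnDeriv μ ν).ennreal_toReal,
    fun w => ENNReal.toReal_nonneg, ?_, fun x _ => ?_, ?_⟩
  · filter_upwards [ae_tendsto_rieszPotential_div hs hμ1 hν1, Measure.rnDeriv_ne_top μ ν]
      with z hlim hz β hβ
    have hβ0 : 0 < β := one_pos.trans hβ
    refine ((ENNReal.tendsto_toReal hz).comp (hlim β hβ0)).congr' ?_
    filter_upwards [self_mem_nhdsWithin] with x hx
    exact (integral_const_mul_dist_rpow_neg_div (hm x (mem_ball_zero_iff.2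
      (norm_lt_one_of_mem_stolzRegion hβ0 hx))) s μ ν x).symm
  · simp only [← integral_rnDeriv_smul hac, smul_eq_mul, mul_comm]
  · rw [withDensity_congr_ae (ofReal_toReal_ae_eq (Measure.rnDeriv_lt_top μ ν)),
      Measure.withDensity_rnDeriv_eq μ ν hac]

/-- Representation by nontangential boundary values in the unit ball:
with `u(x) = ∫_S M(x,w) μ(dw)`, `h(x) = ∫_S M(x,w) ν(dw)` for finite Borel measures
`μ, ν` on the sphere with `ν ≠ 0` and `sup_B u/h < ∞`, there is a Borel
`φ : S → [0,∞)` which is the nontangential limit of `u/h` ν-a.e., with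
`u(x) = ∫_S M(x,w) φ(w) ν(dw)` on `B`; in particular `μ = φ ν`. -/
theorem stmt15 (n : ℕ) (hn : 2 ≤ n) (α : ℝ) (hα : α ∈ Set.Ioo (0 : ℝ) 2)
    (μ ν : Measure (EuclideanSpace ℝ (Fin n)))
    [IsFiniteMeasure μ] [IsFiniteMeasure ν] (hν : ν ≠ 0)
    (hμS : μ (sphere (0 : EuclideanSpace ℝ (Fin n)) 1)ᶜ = 0)
    (hνS : ν (sphere (0 : EuclideanSpace ℝ (Fin n)) 1)ᶜ = 0)
    (hbdd : ∃ C : ℝ, ∀ x ∈ ball (0 : EuclideanSpace ℝ (Fin n)) 1,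
      (∫ w, martinKernel n α x w ∂μ) / (∫ w, martinKernel n α x w ∂ν) ≤ C) :
    ∃ φ : EuclideanSpace ℝ (Fin n) → ℝ, Measurable φ ∧ (∀ w, 0 ≤ φ w) ∧
      (∀ᵐ z ∂ν, ∀ β : ℝ, 1 < β →
        Tendsto (fun x =>
            (∫ w, martinKernel n α x w ∂μ) / (∫ w, martinKernel n α x w ∂ν))
          (nhdsWithin z (stolzSet n β z)) (nhds (φ z))) ∧
      (∀ x ∈ ball (0 : EuclideanSpace ℝ (Fin n)) 1,
        (∫ w, martinKernel n α x w ∂μ) = ∫ w, martinKernel n α x w * φ w ∂ν) ∧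
      μ = ν.withDensity (fun w => ENNReal.ofReal (φ w)) := by
  obtain ⟨φ, hφ, hφ0, hlim, hrepr, hdensity⟩ := stmt15_general
    (Nat.cast_le.2 finrank_euclideanSpace_fin.le) (one_sub_norm_sq_rpow_ne_zero (α / 2))
    μ ν hν hμS hνS hbdd
  exact ⟨φ, hφ, hφ0, hlim.mono fun z hz β hβ => (hz β hβ).mono_left
    (nhdsWithin_mono z (stolzSet_subset_stolzRegion n β z)), hrepr, hdensity⟩
end
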